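/- arXiv:1708.00832 — 3 statements merged into one kernel-verified Lean document; each statement's English description precedes it below -/
import Mathlib

section
/- Let T = {1342, 2314, 3412} (patterns of length 4). Then the generating function for T-avoiders satisfies, as formal power series over ℚ, (1-x)^5·(1-2x)·F_T(x) = (1-3x+3x^2)^2·C(x) - x·(1-x)·(1-3x+5x^2-4x^3), where C(x) is the Catalan number generating function. -/
open PowerSeries

/-- A permutation `π` of `{0,…,n-1}` contains the pattern `σ` (of length `k`) if there is an
order-embedding of positions on which the values of `π` appear in the same relative order as
the values of `σ`. -/
def ContainsPattern {n k : ℕ} (π : Equiv.Perm (Fin n)) (σ : Fin k → Fin k) : Prop :=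
  ∃ f : Fin k ↪o Fin n, ∀ a b : Fin k, σ a < σ b ↔ π (f a) < π (f b)

/-- The number of permutations of length `n` avoiding every pattern in `T`. -/
noncomputable def avoiderCount (T : Set (Fin 4 → Fin 4)) (n : ℕ) : ℕ :=
  Nat.card {π : Equiv.Perm (Fin n) // ∀ σ ∈ T, ¬ ContainsPattern π σ}

/-- The generating function `F_T(x) = ∑_n |S_n(T)| xⁿ` over `ℚ`. -/
noncomputable def avoiderGF (T : Set (Fin 4 → Fin 4)) : PowerSeries ℚ :=
  PowerSeries.mk fun n => (avoiderCount T n : ℚ)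

/-- The generating function of the Catalan numbers over `ℚ`. -/
noncomputable def catalanGF : PowerSeries ℚ :=
  PowerSeries.mk fun n => (catalan n : ℚ)


inductive St where
  | Z (m : ℕ) : St
  | N (c f d : ℕ) : St

def St.width : St → ℕ
  | .Z m => m + 1
  | .N c f _ => c + f + 1

def St.ch : St → ℕ → St
  | .Z m, i => if i < m then .N 2 (m - i - 1) 2 else .Z (m + 1)
  | .N c f d, i =>
    if i < c then .N (c + 1 - i) f (1 + (if i < d then 1 else 0))
    else if i < c + f then .N 0 (c + f - i) (if i < d then 1 else 0)
    else .N (min c 1) (d - min c 1) d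

def St.T : ℕ → St → ℕ
  | 0, _ => 1
  | k + 1, s => ∑ i ∈ Finset.range s.width, St.T k (s.ch i)

def St.Good : St → Prop
  | .Z _ => True
  | .N c f d => (c = 0 ∧ d = 0) ∨ (c = 0 ∧ f = 1 ∧ d = 1) ∨ (c = 1 ∧ f = 0 ∧ d = 1) ∨
     (c = 1 ∧ f = 1 ∧ d = 2) ∨ (2 ≤ c ∧ (d = 1 ∨ d = 2))

theorem St.good_ch (s : St) (hs : s.Good) (i : ℕ) (hi : i < s.width) : (s.ch i).Good := by
  cases s with
  | Z m => simp only [St.ch]; split_ifs <;> simp [St.Good]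
  | N c f d =>
    simp only [St.width] at hi
    unfold St.Good at hs
    unfold St.ch
    dsimp only at hs ⊢
    split_ifs <;> simp only [St.Good, true_and, and_true, true_or, or_true] <;> omega

theorem St.T_unique (H : St → PowerSeries ℚ)
    (hH : ∀ s : St, s.Good → H s = 1 + X * ∑ i ∈ Finset.range s.width, H (s.ch i)) :
    ∀ (k : ℕ) (s : St), s.Good → coeff k (H s) = (St.T k s : ℚ) := by
  intro k
  induction k with
  | zero => intro s hs; rw [hH s hs]; simp [St.T]
  | succ k ih =>
    intro s hs
    rw [hH s hs, map_add, coeff_succ_X_mul, map_sum, St.T]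
    simp only [coeff_one, Nat.succ_ne_zero, if_false, zero_add]
    push_cast
    refine Finset.sum_congr rfl fun i hi => ih _ (s.good_ch hs i (Finset.mem_range.1 hi))

/-- algebra: closed form -/
noncomputable def Hf (C u t : PowerSeries ℚ) : St → PowerSeries ℚ
  | .Z m =>
    let Δ := X^2*u^2*((u^2-u)*C^2+t)
    let s := 1 + X*Δ
    let β := u*X*((C*s-u)*C^2+Δ)
    let γ := C^2*(1-X)*t
    let α := u*(1+X*β+X*γ*u-γ)
    α + β*m + γ*u^m
  | .N c f d =>
    let Δ := X^2*u^2*((u^2-u)*C^2+t)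
    let s := 1 + X*Δ
    if c = 0 then (if d = 0 then u^(f+1) else t)
    else if c = 1 then (if d = 1 then C^2*s else C^2*s + X*u*((u^2-u)*C^2+t))
    else (if d = 1 then (C*s-u+u^(f+1))*C^c else (C*s-u+u^(f+1))*C^c + Δ)


theorem geo (u : PowerSeries ℚ) (hu : (1-X)*u = 1) (f : ℕ) : X * ∑ e ∈ Finset.range f, u^(f-e+1) = u^(f+1) - u := by
  rw [← Finset.sum_range_reflect]
  have : ∀ f : ℕ, X * ∑ j ∈ Finset.range f, u^(j+2) = u^(f+1) - u := by
    intro f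
    induction f with
    | zero => simp
    | succ f ih => rw [Finset.sum_range_succ, mul_add, ih]; linear_combination (-u^(f+1))*hu
  rw [← this f]
  congr 1
  refine Finset.sum_congr rfl fun j hj => ?_
  have := Finset.mem_range.1 hj
  congr 1; omega

theorem geoC (C : PowerSeries ℚ) (hC : C = 1 + X*C^2) (c : ℕ) : X * ∑ j ∈ Finset.range c, C^(c+1-j) = C^c - 1 := by
  rw [← Finset.sum_range_reflect]
  have : ∀ f : ℕ, X * ∑ j ∈ Finset.range f, C^(j+2) = C^f - 1 := by
    intro f
    induction f with
    | zero => simp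
    | succ f ih => rw [Finset.sum_range_succ, mul_add, ih]; linear_combination (-C^f)*hC
  rw [← this c]
  congr 1
  refine Finset.sum_congr rfl fun j hj => ?_
  have := Finset.mem_range.1 hj
  congr 1; omega

theorem Hf_Z (C u t : PowerSeries ℚ) (hC : C = 1 + X*C^2) (hu : (1-X)*u = 1) (ht : (1-2*X)*t = 1)
    (m : ℕ) : Hf C u t (.Z m) = 1 + X * ∑ i ∈ Finset.range (St.Z m).width, Hf C u t ((St.Z m).ch i) := by
  have key : ∀ m : ℕ, X * ∑ i ∈ Finset.range m, Hf C u t (.N 2 i 2) = Hf C u t (.Z m) - 1 - X * Hf C u t (.Z (m+1)) := by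
    intro m
    induction m with
    | zero => simp [Hf]; grind
    | succ m ih =>
      rw [Finset.sum_range_succ, mul_add, ih]
      simp [Hf, pow_succ u]
      generalize u^m = U
      grind
  have e : ∑ i ∈ Finset.range (m+1), Hf C u t ((St.Z m).ch i) = ∑ i ∈ Finset.range m, Hf C u t (.N 2 i 2) + Hf C u t (.Z (m+1)) := by
    rw [Finset.sum_range_succ]
    congr 1
    · rw [← Finset.sum_range_reflect]
      refine Finset.sum_congr rfl fun j hj => ?_
      have := Finset.mem_range.1 hj
      have h2 : m - 1 - j < m := by omega
      have h3 : m - (m - 1 - j) - 1 = j := by omega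
      simp only [St.ch, h2, if_true, h3]
    · simp [St.ch]
  rw [St.width, e, mul_add, key]; ring

theorem final (C u t : PowerSeries ℚ) (hC : C = 1 + X*C^2) (hu : (1-X)*u = 1) (ht : (1-2*X)*t = 1)
    : (1 - X)^5 * (1 - 2*X) * Hf C u t (.Z 0) = (1 - 3*X + 3*X^2)^2 * C - X * (1 - X) * (1 - 3*X + 5*X^2 - 4*X^3) := by
  simp [Hf]
  grind

theorem Hf_N (C u t : PowerSeries ℚ) (hC : C = 1 + X*C^2) (hu : (1-X)*u = 1) (ht : (1-2*X)*t = 1)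
    (c f d : ℕ) (hg : (St.N c f d).Good) :
   Hf C u t (.N c f d) = 1 + X * ∑ i ∈ Finset.range (St.N c f d).width, Hf C u t ((St.N c f d).ch i) := by
  have e : ∑ i ∈ Finset.range (St.N c f d).width, Hf C u t ((St.N c f d).ch i) =
     ∑ i ∈ Finset.range c, Hf C u t (.N (c + 1 - i) f (1 + (if i < d then 1 else 0)))
     + ∑ i ∈ Finset.range f, Hf C u t (.N 0 (f - i) (if c + i < d then 1 else 0))
     + Hf C u t (.N (min c 1) (d - min c 1) d) := by
    rw [St.width, Finset.sum_range_succ, Finset.sum_range_add]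
    congr 1
    · congr 1
      · refine Finset.sum_congr rfl fun j hj => ?_
        have := Finset.mem_range.1 hj
        simp only [St.ch, this, if_true]
      · refine Finset.sum_congr rfl fun j hj => ?_
        have := Finset.mem_range.1 hj
        simp [St.ch, this]
        congr 2; omega
    · simp [St.ch]
  rw [e]
  rcases hg with ⟨rfl, rfl⟩ | ⟨rfl, rfl, rfl⟩ | ⟨rfl, rfl, rfl⟩ | ⟨rfl, rfl, rfl⟩ | ⟨hc, hd⟩
  · simp [Hf, mul_add]
    rw [geo u hu]
    linear_combination (1)*hu
  · simp [Hf]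
    linear_combination ht
  · simp [Hf]
    grind
  · simp [Hf]
    grind
  · have e2 : ∑ i ∈ Finset.range f, Hf C u t (.N 0 (f - i) (if c + i < d then 1 else 0))
       = ∑ i ∈ Finset.range f, u^(f-i+1) := by
      refine Finset.sum_congr rfl fun j hj => ?_
      have : ¬ (c + j < d) := by omega
      simp [Hf, this]
    have e3 : ∑ i ∈ Finset.range c, Hf C u t (.N (c + 1 - i) f (1 + (if i < d then 1 else 0)))
       = (C*(1 + X*(X^2*u^2*((u^2-u)*C^2+t)))-u+u^(f+1)) * ∑ i ∈ Finset.range c, C^(c+1-i)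
         + (d : PowerSeries ℚ) * (X^2*u^2*((u^2-u)*C^2+t)) := by
      have : (d : PowerSeries ℚ) * (X^2*u^2*((u^2-u)*C^2+t)) = ∑ i ∈ Finset.range c, if i < d then (X^2*u^2*((u^2-u)*C^2+t)) else 0 := by
        rw [← Finset.sum_filter, Finset.sum_const]
        have : (Finset.range c).filter (· < d) = Finset.range d := by
          ext i; simp; omega
        rw [this]; simp
      rw [this, Finset.mul_sum, ← Finset.sum_add_distrib]
      refine Finset.sum_congr rfl fun j hj => ?_
      have := Finset.mem_range.1 hj
      have h0 : c + 1 - j ≠ 0 := by omega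
      have h1 : c + 1 - j ≠ 1 := by omega
      simp only [Hf, h0, h1, if_false]
      by_cases hjd : j < d <;> simp [hjd]
    rw [e2, e3, mul_add, mul_add, mul_add, geo u hu, mul_left_comm, geoC C hC]
    have hm : min c 1 = 1 := by omega
    have h0 : c ≠ 0 := by omega
    have h1 : c ≠ 1 := by omega
    rw [hm]
    clear e e2 e3 hm
    rcases hd with rfl | rfl
    · simp [Hf, h0, h1, pow_succ u f]
      generalize C^c = D
      generalize u^f = U
      clear hc h0 h1
      grind
    · simp [Hf, h0, h1, pow_succ u f]
      generalize C^c = D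
      generalize u^f = U
      grind


/-- value map when inserting v -/
def bump (v x : ℕ) : ℕ := if x < v then x else x + 1

def Av {n : ℕ} (p : Fin n → ℕ) : Prop :=
  ∀ i j k l : Fin n, i < j → j < k → k < l →
    ¬ (p i < p l ∧ p l < p j ∧ p j < p k) ∧ ¬ (p k < p i ∧ p i < p j ∧ p j < p l) ∧
    ¬ (p k < p l ∧ p l < p i ∧ p i < p j)

def Act {n : ℕ} (p : Fin n → ℕ) (v : ℕ) : Prop :=
  ∀ i j k : Fin n, i < j → j < k →
    ¬ (v ≤ p k ∧ p k < p i ∧ p i < p j) ∧ ¬ (p j < v ∧ v ≤ p i ∧ p i < p k) ∧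
    ¬ (p j < p k ∧ p k < v ∧ v ≤ p i)

def RR {n : ℕ} (p : Fin n → ℕ) (v w : ℕ) : Prop :=
  ∀ j k : Fin n, j < k →
    ¬ (w ≤ p k ∧ p k < v ∧ v ≤ p j) ∧ ¬ (p j < w ∧ v ≤ p k) ∧ ¬ (p j < p k ∧ p k < w)

def insp {n : ℕ} (v : ℕ) (p : Fin n → ℕ) : Fin (n + 1) → ℕ := Fin.cons v (fun i => bump v (p i))

theorem bump_lt (v x y : ℕ) : bump v x < bump v y ↔ x < y := by unfold bump; split_ifs <;> omega
theorem bump_ge (v x w : ℕ) (h : w ≤ v) : w ≤ bump v x ↔ w ≤ x := by unfold bump; split_ifs <;> omega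
theorem bump_lt' (v x w : ℕ) (h : w ≤ v) : bump v x < w ↔ x < w := by unfold bump; split_ifs <;> omega
theorem bump_ge1 (v x w : ℕ) (h : v ≤ w) : w + 1 ≤ bump v x ↔ w ≤ x := by unfold bump; split_ifs <;> omega
theorem bump_lt1 (v x w : ℕ) (h : v ≤ w) : bump v x < w + 1 ↔ x < w := by unfold bump; split_ifs <;> omega
theorem lt_bump (v x : ℕ) : v < bump v x ↔ v ≤ x := by unfold bump; split_ifs <;> omega

theorem av_ins {n : ℕ} (p : Fin n → ℕ) (v : ℕ) : Av (insp v p) ↔ Av p ∧ Act p v := by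
  unfold Av Act
  simp only [Fin.forall_fin_succ (n := n), insp, Fin.cons_zero, Fin.cons_succ, bump_lt, lt_bump, bump_lt' v _ v le_rfl,
    Fin.succ_lt_succ_iff, Fin.not_lt_zero, Fin.succ_pos, lt_irrefl]
  grind

theorem act_hi {n : ℕ} (p : Fin n → ℕ) (v w : ℕ) (h : v ≤ w) : Act (insp v p) (w+1) ↔ Act p w := by
  unfold Act
  simp only [Fin.forall_fin_succ (n := n), insp, Fin.cons_zero, Fin.cons_succ, bump_lt, lt_bump, bump_lt' v _ v le_rfl,
    Fin.succ_lt_succ_iff, Fin.not_lt_zero, Fin.succ_pos, lt_irrefl, bump_lt1 v _ w h, bump_ge1 v _ w h]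
  grind

theorem act_lo {n : ℕ} (p : Fin n → ℕ) (v w : ℕ) (h : w ≤ v) :
    Act (insp v p) w ↔ Act p w ∧ RR p v w := by
  unfold Act RR
  simp only [Fin.forall_fin_succ (n := n), insp, Fin.cons_zero, Fin.cons_succ, bump_lt, lt_bump, bump_lt' v _ v le_rfl,
    Fin.succ_lt_succ_iff, Fin.not_lt_zero, Fin.succ_pos, lt_irrefl, bump_lt' v _ w h, bump_ge v _ w h]
  grind

theorem rel_hl {n : ℕ} (p : Fin n → ℕ) (v u w : ℕ) (h : w ≤ v) (h' : v ≤ u) :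
    RR (insp v p) (u+1) w ↔ RR p u w := by
  unfold RR
  simp only [Fin.forall_fin_succ (n := n), insp, Fin.cons_zero, Fin.cons_succ, bump_lt, lt_bump, bump_lt' v _ v le_rfl,
    Fin.succ_lt_succ_iff, Fin.not_lt_zero, Fin.succ_pos, lt_irrefl, bump_lt' v _ w h, bump_ge v _ w h, bump_lt1 v _ u h', bump_ge1 v _ u h']
  grind

theorem rel_hh {n : ℕ} (p : Fin n → ℕ) (hp : ∀ i, p i < n) (hs : ∀ x < n, ∃ i, p i = x)
    (v u w : ℕ) (h : v ≤ w) (h' : w ≤ u) (hu : u ≤ n) :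
    RR (insp v p) (u+1) (w+1) ↔ u = n ∧ w = v ∧ RR p u w := by
  unfold RR
  simp only [Fin.forall_fin_succ (n := n), insp, Fin.cons_zero, Fin.cons_succ, bump_lt, lt_bump, bump_lt' v _ v le_rfl,
    Fin.succ_lt_succ_iff, Fin.not_lt_zero, Fin.succ_pos, lt_irrefl, bump_lt1 v _ w h, bump_ge1 v _ w h,
    bump_lt1 v _ u (h.trans h'), bump_ge1 v _ u (h.trans h')]
  constructor
  · intro H
    refine ⟨?_, ?_, ?_⟩
    · by_contra hne
      obtain ⟨i, hi⟩ := hs u (by omega)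
      grind
    · by_contra hne
      obtain ⟨i, hi⟩ := hs v (by omega)
      grind
    · grind
  · rintro ⟨rfl, rfl, H⟩
    grind

theorem rel_ll {n : ℕ} (p : Fin n → ℕ) (hs : ∀ x < n, ∃ i, p i = x)
    (v u w : ℕ) (h : w ≤ u) (h' : u ≤ v) (hu : v ≤ n) :
    RR (insp v p) u w ↔ w = u ∧ RR p u w := by
  unfold RR
  simp only [Fin.forall_fin_succ (n := n), insp, Fin.cons_zero, Fin.cons_succ, bump_lt, lt_bump, bump_lt' v _ v le_rfl,
    Fin.succ_lt_succ_iff, Fin.not_lt_zero, Fin.succ_pos, lt_irrefl, bump_lt' v _ w (h.trans h'), bump_ge v _ w (h.trans h'),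
    bump_lt' v _ u h', bump_ge v _ u h']
  constructor
  · intro H
    refine ⟨?_, ?_⟩
    · by_contra hne
      obtain ⟨i, hi⟩ := hs w (by omega)
      grind
    · grind
  · rintro ⟨rfl, H⟩
    grind

/-- State invariant. -/
def StInv {n : ℕ} (p : Fin n → ℕ) : St → Prop
  | .Z m => n = m ∧ (∀ w ≤ n, Act p w) ∧ ∀ v w, w ≤ v → v ≤ n → (RR p v w ↔ v = w ∨ v = n)
  | .N c f d => d ≤ c + f ∧ (1 ≤ c → 1 ≤ d) ∧ ∃ a : ℕ → ℕ, (∀ i j, i < j → j ≤ c + f → a i < a j) ∧ a (c + f) = n ∧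
      (∀ w ≤ n, (Act p w ↔ ∃ i ≤ c + f, a i = w)) ∧
      ∀ i j, j ≤ i → i ≤ c + f → (RR p (a i) (a j) ↔ (i < c + f ∧ j = 0 ∧ i < c) ∨ (i = c + f ∧ j < d))

/-- site map -/
def newA (a : ℕ → ℕ) (i r : ℕ) : ℕ → ℕ := fun t => if t < r then a t else a (i + t - r) + 1

theorem inv_step {n : ℕ} (p : Fin n → ℕ) (hp : ∀ i, p i < n) (hs : ∀ x < n, ∃ i, p i = x)
    (M : ℕ) (a : ℕ → ℕ) (ha : ∀ i j, i < j → j ≤ M → a i < a j) (hM : a M = n)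
    (hA : ∀ w ≤ n, (Act p w ↔ ∃ i ≤ M, a i = w)) (i r : ℕ) (hi : i ≤ M) (hr : r ≤ i + 1)
    (hR : ∀ j ≤ i, (RR p (a i) (a j) ↔ j < r)) :
    (∀ t s, t < s → s ≤ r + M - i → newA a i r t < newA a i r s) ∧
    newA a i r (r + M - i) = n + 1 ∧
    (∀ w ≤ n + 1, (Act (insp (a i) p) w ↔ ∃ t ≤ r + M - i, newA a i r t = w)) ∧
    ∀ t s, s ≤ t → t ≤ r + M - i → (RR (insp (a i) p) (newA a i r t) (newA a i r s) ↔
      if t < r then (s = t ∧ RR p (a t) (a s)) else if s < r then RR p (a (i + t - r)) (a s)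
      else t = r + M - i ∧ s = r ∧ RR p n (a i)) := by
  have hle : ∀ i j, i ≤ j → j ≤ M → a i ≤ a j := by
    intro i j h1 h2
    rcases Nat.eq_or_lt_of_le h1 with rfl | h
    · exact le_rfl
    · exact (ha _ _ h h2).le
  have hlt : ∀ i j, i ≤ M → j ≤ M → a i ≤ a j → i ≤ j := by
    intro i j h1 h2 h3
    by_contra h
    have := ha j i (by omega) h1
    omega
  refine ⟨?_, ?_, ?_, ?_⟩
  · intro t s h1 h2
    unfold newA
    split_ifs with h3 h4 h4
    · exact ha _ _ h1 (by omega)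
    · have := hle t (i + s - r) (by omega) (by omega)
      omega
    · omega
    · have := ha (i + t - r) (i + s - r) (by omega) (by omega)
      omega
  · unfold newA
    rw [if_neg (by omega), show i + (r + M - i) - r = M by omega, hM]
  · intro w hw
    have hin : a i ≤ n := hM ▸ hle i M hi le_rfl
    by_cases hwi : w ≤ a i
    · rw [act_lo p _ _ hwi, hA w (by omega)]
      constructor
      · rintro ⟨⟨j, hj, rfl⟩, h⟩
        have hji := hlt j i hj hi hwi
        have := (hR j hji).1 h
        exact ⟨j, by omega, by simp [newA, this]⟩
      · rintro ⟨t, ht, rfl⟩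
        unfold newA at hwi ⊢
        split_ifs at hwi ⊢ with h
        · exact ⟨⟨t, by omega, rfl⟩, (hR t (by omega)).2 h⟩
        · have := hle i (i + t - r) (by omega) (by omega)
          omega
    · obtain ⟨w, rfl⟩ : ∃ x, w = x + 1 := ⟨w - 1, by omega⟩
      rw [act_hi p _ _ (by omega), hA w (by omega)]
      constructor
      · rintro ⟨j, hj, rfl⟩
        have hji := hlt i j hi hj (by omega)
        refine ⟨j + r - i, by omega, ?_⟩
        unfold newA
        rw [if_neg (by omega), show i + (j + r - i) - r = j by omega]
      · rintro ⟨t, ht, h⟩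
        unfold newA at h
        split_ifs at h with h'
        · have := hle t i (by omega) hi
          omega
        · exact ⟨i + t - r, by omega, by omega⟩
  · intro t s h1 h2
    have hin : a i ≤ n := hM ▸ hle i M hi le_rfl
    unfold newA
    by_cases ht : t < r
    · have hsr : s < r := by omega
      rw [if_pos ht, if_pos hsr, if_pos ht, rel_ll p hs _ _ _ (hle s t h1 (by omega)) (hle t i (by omega) hi) hin]
      have : a s = a t ↔ s = t := by
        constructor
        · intro h
          have := hlt s t (by omega) (by omega) h.le
          have := hlt t s (by omega) (by omega) h.ge
          omega
        · rintro rfl; rfl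
      rw [this]
    · rw [if_neg ht, if_neg ht]
      by_cases hsr : s < r
      · rw [if_pos hsr, if_pos hsr, rel_hl]
        · exact hle s i (by omega) hi
        · exact hle i _ (by omega) (by omega)
      · rw [if_neg hsr, if_neg hsr, rel_hh p hp hs]
        · have e1 : a (i + t - r) = n ↔ t = r + M - i := by
            constructor
            · intro h
              have := hlt M (i + t - r) le_rfl (by omega) (by omega)
              omega
            · rintro rfl
              rw [show i + (r + M - i) - r = M by omega, hM]
          have e2 : a (i + s - r) = a i ↔ s = r := by
            constructor
            · intro h
              have := hlt (i + s - r) i (by omega) (by omega) h.le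
              omega
            · rintro rfl
              rw [show i + s - s = i by omega]
          rw [e1, e2]
          constructor
          · rintro ⟨rfl, rfl, h⟩
            refine ⟨rfl, rfl, ?_⟩
            rwa [show i + (s + M - i) - s = M by omega, hM, show i + s - s = i by omega] at h
          · rintro ⟨rfl, rfl, h⟩
            refine ⟨rfl, rfl, ?_⟩
            rwa [show i + (s + M - i) - s = M by omega, hM, show i + s - s = i by omega]
        · exact hle i _ (by omega) (by omega)
        · exact hle _ _ (by omega) (by omega)
        · rw [← hM]; exact hle _ _ (by omega) (by omega)

/-- The conclusion: the active sites are enumerated with child states. -/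
theorem inv_children {n : ℕ} (p : Fin n → ℕ) (hp : ∀ i, p i < n) (hs : ∀ x < n, ∃ i, p i = x)
    (st : St) (h : StInv p st) : ∃ a : ℕ → ℕ, (∀ i < st.width, ∀ j < st.width, a i = a j → i = j) ∧
      (∀ i < st.width, a i ≤ n) ∧
      (∀ w ≤ n, (Act p w ↔ ∃ i < st.width, a i = w)) ∧
      ∀ i < st.width, StInv (insp (a i) p) (st.ch i) := by
  cases st with
  | Z m =>
    obtain ⟨rfl, hA, hR⟩ := h
    refine ⟨id, fun _ _ _ _ h => h, fun i hi => by simp [St.width] at hi; simp; omega, ?_, ?_⟩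
    · intro w hw
      simp only [hA w hw, true_iff]
      exact ⟨w, by simp [St.width]; omega, rfl⟩
    · intro i hi
      simp only [St.width] at hi
      have hA' : ∀ w ≤ n, (Act p w ↔ ∃ i ≤ n, id i = w) := fun w hw => by
        simp only [hA w hw, true_iff]; exact ⟨w, hw, rfl⟩
      simp only [St.ch]
      split_ifs with hin
      · refine ⟨by omega, by omega, fun t => i + t, by intros; simp only; omega, by simp only; omega, ?_, ?_⟩
        · intro w hw
          simp only [id]
          have e : (∃ t ≤ 2 + (n - i - 1), i + t = w) ↔ i ≤ w :=
            ⟨by rintro ⟨t, _, rfl⟩; omega, fun h => ⟨w - i, by omega, by omega⟩⟩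
          rw [e]
          by_cases hwi : w ≤ i
          · rw [act_lo p _ _ hwi, hR _ _ hwi (by omega)]
            simp only [hA w (by omega), true_and]
            omega
          · obtain ⟨w, rfl⟩ : ∃ x, w = x + 1 := ⟨w - 1, by omega⟩
            rw [act_hi p _ _ (by omega)]
            simp only [hA w (by omega), true_iff]
            omega
        · intro t s h1 h2
          simp only [id]
          rcases t with _ | t
          · rw [rel_ll p hs _ _ _ (by omega) (by omega) (by omega), hR _ _ (by omega) (by omega)]
            omega
          · rcases s with _ | s
            · rw [← add_assoc, rel_hl p _ _ _ (by omega) (by omega), hR _ _ (by omega) (by omega)]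
              omega
            · rw [← add_assoc, ← add_assoc, rel_hh p hp hs _ _ _ (by omega) (by omega) (by omega),
                hR _ _ (by omega) (by omega)]
              omega
      · obtain rfl : i = n := by omega
        have key := inv_step p hp hs i (fun t => t) (fun _ _ h _ => h) rfl hA' i (i+1) (by omega) (by omega) (by
          intro j hj; rw [hR _ _ hj le_rfl]; simp; omega)
        obtain ⟨b1, b2, b3, b4⟩ := key
        have e : ∀ t ≤ i + 1, newA (fun t => t) i (i+1) t = t := by
          intro t ht; unfold newA; split_ifs <;> dsimp only <;> omega
        refine ⟨rfl, ?_, ?_⟩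
        · intro w hw
          exact (b3 w hw).2 ⟨w, by omega, e w hw⟩
        · intro v w h1 h2
          have := b4 v w h1 (by omega)
          rw [e v h2, e w (by omega)] at this
          simp only [id]
          rw [this]
          split_ifs with h3 h4
          · rw [hR _ _ h1 (by omega)]; omega
          · rw [hR _ _ (by omega) (by omega)]; omega
          · rw [hR _ _ (by omega) (by omega)]; omega
  | N c f d =>
    obtain ⟨hd1, hd2, a, ha, hM, hA, hR⟩ := h
    have hinj : ∀ i ≤ c + f, ∀ j ≤ c + f, a i = a j → i = j := by
      intro i hi j hj h
      rcases lt_trichotomy i j with h' | h' | h'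
      · have := ha _ _ h' hj; omega
      · exact h'
      · have := ha _ _ h' hi; omega
    refine ⟨a, ?_, ?_, ?_, ?_⟩
    · intro i hi j hj
      simp only [St.width] at hi hj
      exact hinj i (by omega) j (by omega)
    · intro i hi
      simp only [St.width] at hi
      rcases Nat.eq_or_lt_of_le (show i ≤ c + f by omega) with rfl | h
      · exact hM.le
      · exact hM ▸ (ha _ _ h le_rfl).le
    · intro w hw
      rw [hA w hw]
      simp only [St.width, Nat.lt_succ_iff]
    · intro i hi
      simp only [St.width] at hi
      have hRn : RR p n (a i) ↔ i < d := by
        have := hR (c + f) i (by omega) le_rfl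
        rw [hM] at this
        rw [this]; omega
      have hch : (St.N c f d).ch i = if i < c then .N (c + 1 - i) f (1 + (if i < d then 1 else 0))
        else if i < c + f then .N 0 (c + f - i) (if i < d then 1 else 0)
        else .N (min c 1) (d - min c 1) d := rfl
      rw [hch]
      by_cases h1 : i < c
      · rw [if_pos h1]
        obtain ⟨b1, b2, b3, b4⟩ := inv_step p hp hs (c + f) a ha hM hA i 1 (by omega) (by omega) (by
          intro j hj; rw [hR _ _ hj (by omega)]; omega)
        have hM' : c + 1 - i + f = 1 + (c + f) - i := by omega
        refine ⟨by split_ifs <;> omega, by omega, newA a i 1, ?_⟩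
        rw [hM']
        refine ⟨b1, b2, b3, ?_⟩
        intro t s h3 h4
        rw [b4 t s h3 h4, hRn]
        split_ifs
        all_goals try rw [hR _ _ (by omega) (by omega)]
        all_goals omega
      rw [if_neg h1]
      by_cases h2 : i < c + f
      · rw [if_pos h2]
        obtain ⟨b1, b2, b3, b4⟩ := inv_step p hp hs (c + f) a ha hM hA i 0 (by omega) (by omega) (by
          intro j hj; rw [hR _ _ hj (by omega)]; omega)
        have hM' : 0 + (c + f - i) = 0 + (c + f) - i := by omega
        refine ⟨by split_ifs <;> omega, by omega, newA a i 0, ?_⟩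
        rw [hM']
        refine ⟨b1, b2, b3, ?_⟩
        intro t s h3 h4
        rw [b4 t s h3 h4, hRn]
        split_ifs
        all_goals try rw [hR _ _ (by omega) (by omega)]
        all_goals omega
      · rw [if_neg h2]
        obtain rfl : i = c + f := by omega
        obtain ⟨b1, b2, b3, b4⟩ := inv_step p hp hs (c + f) a ha hM hA (c + f) d (by omega) (by omega) (by
          intro j hj; rw [hR _ _ hj (by omega)]; omega)
        have hM' : min c 1 + (d - min c 1) = d + (c + f) - (c + f) := by omega
        refine ⟨by omega, by omega, newA a (c + f) d, ?_⟩
        rw [hM']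
        refine ⟨b1, b2, b3, ?_⟩
        intro t s h3 h4
        rw [b4 t s h3 h4, hRn]
        split_ifs
        all_goals try rw [hR _ _ (by omega) (by omega)]
        all_goals omega

/-- values of a permutation -/
def pv {n : ℕ} (π : Equiv.Perm (Fin n)) : Fin n → ℕ := fun i => (π i : ℕ)

theorem ins_inj {n : ℕ} (v : Fin (n + 1)) (π : Equiv.Perm (Fin n)) :
    Function.Injective (Fin.cons v (fun i => v.succAbove (π i)) : Fin (n + 1) → Fin (n + 1)) := by
  rw [Fin.cons_injective_iff]
  refine ⟨?_, fun i j h => π.injective (Fin.succAbove_right_injective h)⟩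
  rintro ⟨i, hi⟩
  exact Fin.succAbove_ne _ _ hi

/-- insertion of a first letter -/
noncomputable def insPerm {n : ℕ} (v : Fin (n + 1)) (π : Equiv.Perm (Fin n)) : Equiv.Perm (Fin (n + 1)) :=
  Equiv.ofBijective _ (Finite.injective_iff_bijective.1 (ins_inj v π))

theorem pv_ins {n : ℕ} (v : Fin (n + 1)) (π : Equiv.Perm (Fin n)) : pv (insPerm v π) = insp (v : ℕ) (pv π) := by
  funext i
  refine Fin.cases ?_ (fun i => ?_) i
  · simp [pv, insPerm, insp]
  · by_cases h : (π i : ℕ) < (v : ℕ)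
    · simp [pv, insPerm, insp, bump, Fin.succAbove, Fin.lt_def, h]
    · have h' : (v : ℕ) ≤ (π i : ℕ) := by omega
      simp [pv, insPerm, insp, bump, Fin.succAbove, Fin.lt_def, h, h']

theorem insPerm_bij (n : ℕ) : Function.Bijective (fun x : Fin (n + 1) × Equiv.Perm (Fin n) => insPerm x.1 x.2) := by
  rw [Fintype.bijective_iff_injective_and_card]
  constructor
  · rintro ⟨v, π⟩ ⟨w, ρ⟩ h
    have h0 : ∀ i, insPerm v π i = insPerm w ρ i := fun i => by
      have := congrArg (fun e : Equiv.Perm (Fin (n+1)) => e i) h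
      simpa using this
    have hv : v = w := by simpa [insPerm] using h0 0
    subst hv
    congr 1
    ext i
    have := h0 i.succ
    simp only [insPerm, Equiv.ofBijective_apply, Fin.cons_succ] at this
    rw [Fin.succAbove_right_injective this]
  · simp [Fintype.card_perm, Nat.factorial_succ]

open Classical in
/-- number of `k`-step extensions -/
noncomputable def ExtN : (k : ℕ) → {n : ℕ} → Equiv.Perm (Fin n) → ℕ
  | 0, _, _ => 1
  | k + 1, n, π => ∑ v : Fin (n + 1), if Act (pv π) v then ExtN k (insPerm v π) else 0

open Classical in
theorem ext_sum (k : ℕ) : ∀ n : ℕ, ∑ π : Equiv.Perm (Fin n), (if Av (pv π) then ExtN k π else 0) =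
    ∑ π : Equiv.Perm (Fin (n + k)), (if Av (pv π) then 1 else 0) := by
  induction k with
  | zero => intro n; simp [ExtN]
  | succ k ih =>
    intro n
    have e : n + (k + 1) = n + 1 + k := by omega
    rw [e, ← ih (n + 1), ← (Function.Bijective.sum_comp (insPerm_bij n) (fun ρ => if Av (pv ρ) then ExtN k ρ else 0)),
      Fintype.sum_prod_type, Finset.sum_comm]
    refine Finset.sum_congr rfl fun π _ => ?_
    by_cases h : Av (pv π)
    · rw [if_pos h, ExtN]
      refine Finset.sum_congr rfl fun v _ => ?_
      simp only [pv_ins, av_ins, h, true_and]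
    · rw [if_neg h]
      symm
      refine Finset.sum_eq_zero fun v _ => ?_
      simp only [pv_ins, av_ins, h, false_and, if_false]

open Classical in
theorem ext_eq (k : ℕ) : ∀ (n : ℕ) (π : Equiv.Perm (Fin n)) (st : St), StInv (pv π) st → ExtN k π = St.T k st := by
  induction k with
  | zero => intro n π st _; simp [ExtN, St.T]
  | succ k ih =>
    intro n π st h
    obtain ⟨a, h1, h2, h3, h4⟩ := inv_children (pv π) (fun i => (π i).2)
      (fun x hx => ⟨π.symm ⟨x, hx⟩, by simp [pv]⟩) st h
    rw [ExtN, St.T, ← Finset.sum_filter]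
    symm
    refine Finset.sum_bij (fun i _ => Fin.ofNat (n + 1) (a i)) ?_ ?_ ?_ ?_
    · intro i hi
      have hi := Finset.mem_range.1 hi
      have := h2 i hi
      rw [Finset.mem_filter]
      refine ⟨Finset.mem_univ _, ?_⟩
      simp only [Fin.ofNat, Nat.mod_eq_of_lt (Nat.lt_succ_of_le this)]
      exact (h3 _ this).2 ⟨i, hi, rfl⟩
    · intro i hi j hj hij
      have hi := Finset.mem_range.1 hi
      have hj := Finset.mem_range.1 hj
      have e1 := h2 i hi
      have e2 := h2 j hj
      simp only [Fin.ofNat, Nat.mod_eq_of_lt (Nat.lt_succ_of_le e1), Nat.mod_eq_of_lt (Nat.lt_succ_of_le e2), Fin.mk.injEq] at hij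
      exact h1 i hi j hj hij
    · intro v hv
      have hv := (Finset.mem_filter.1 hv).2
      obtain ⟨i, hi, hiv⟩ := (h3 v (Nat.le_of_lt_succ v.2)).1 hv
      refine ⟨i, Finset.mem_range.2 hi, ?_⟩
      ext
      simp only [Fin.ofNat, hiv, Nat.mod_eq_of_lt v.2]
    · intro i hi
      have hi := Finset.mem_range.1 hi
      symm
      apply ih
      rw [pv_ins]
      have e1 := h2 i hi
      simp only [Fin.ofNat, Nat.mod_eq_of_lt (Nat.lt_succ_of_le e1)]
      exact h4 i hi

theorem contains_iff {n : ℕ} (π : Equiv.Perm (Fin n)) (σ : Fin 4 → Fin 4) :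
    ContainsPattern π σ ↔ ∃ i j k l : Fin n, i < j ∧ j < k ∧ k < l ∧
      ∀ a b : Fin 4, σ a < σ b ↔ π (![i,j,k,l] a) < π (![i,j,k,l] b) := by
  constructor
  · rintro ⟨f, hf⟩
    refine ⟨f 0, f 1, f 2, f 3, f.strictMono (by decide), f.strictMono (by decide), f.strictMono (by decide), ?_⟩
    have : ![f 0, f 1, f 2, f 3] = f := by
      funext a; fin_cases a <;> rfl
    rw [this]; exact hf
  · rintro ⟨i, j, k, l, h1, h2, h3, h⟩
    refine ⟨OrderEmbedding.ofStrictMono ![i,j,k,l] ?_, h⟩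
    rw [Fin.strictMono_iff_lt_succ]
    intro a; fin_cases a
    · exact h1
    · exact h2
    · exact h3

theorem avoid_iff {n : ℕ} (π : Equiv.Perm (Fin n)) :
    (∀ σ ∈ ({![0,2,3,1], ![1,2,0,3], ![2,3,0,1]} : Set (Fin 4 → Fin 4)), ¬ ContainsPattern π σ) ↔ Av (pv π) := by
  simp only [Set.mem_insert_iff, Set.mem_singleton_iff, forall_eq_or_imp, forall_eq, contains_iff, Av]
  simp only [Fin.forall_fin_succ (n := 3), Fin.forall_fin_succ (n := 2), Fin.forall_fin_succ (n := 1), Fin.forall_fin_succ (n := 0)]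
  simp [pv]
  grind

theorem count_eq (n : ℕ) : avoiderCount ({![0,2,3,1], ![1,2,0,3], ![2,3,0,1]} : Set (Fin 4 → Fin 4)) n = St.T n (.Z 0) := by
  classical
  unfold avoiderCount
  simp only [avoid_iff]
  rw [Nat.card_eq_fintype_card, Fintype.card_subtype, Finset.card_filter]
  have h := ext_sum n 0
  rw [zero_add] at h
  rw [← h, Fintype.sum_unique, if_pos, ext_eq n 0 _ (.Z 0)]
  · refine ⟨rfl, fun w _ i => i.elim0, fun v w h1 h2 => ?_⟩
    have : RR (pv (default : Equiv.Perm (Fin 0))) v w := fun i => i.elim0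
    simp only [this, true_iff]
    omega
  · exact fun i => i.elim0

theorem catGF : catalanGF = 1 + X * catalanGF ^ 2 := by
  have h := congrArg (PowerSeries.map (Nat.castRingHom ℚ)) catalanSeries_sq_mul_X_add_one
  have e : PowerSeries.map (Nat.castRingHom ℚ) catalanSeries = catalanGF := by
    ext n; simp [catalanGF]
  simp only [map_add, map_mul, map_pow, map_one, PowerSeries.map_X, e] at h
  rw [add_comm, mul_comm]; exact h.symm

theorem statement_9 :
    ((1 : PowerSeries ℚ) - X)^5 * (1 - 2*X) * avoiderGF ({![0,2,3,1], ![1,2,0,3], ![2,3,0,1]} : Set (Fin 4 → Fin 4)) =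
      (1 - 3*X + 3*X^2)^2 * catalanGF - X * (1 - X) * (1 - 3*X + 5*X^2 - 4*X^3) := by
  have hu : ((1 : PowerSeries ℚ) - X) * (1 - X)⁻¹ = 1 := PowerSeries.mul_inv_cancel _ (by simp)
  have ht : ((1 : PowerSeries ℚ) - 2 * X) * (1 - 2 * X)⁻¹ = 1 := PowerSeries.mul_inv_cancel _ (by simp)
  rw [← final catalanGF _ _ catGF hu ht]
  congr 1
  ext n
  rw [avoiderGF, coeff_mk, count_eq]
  refine (St.T_unique _ ?_ n (.Z 0) trivial).symm
  intro s hs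
  cases s with
  | Z m => exact Hf_Z _ _ _ catGF hu ht m
  | N c f d => exact Hf_N _ _ _ catGF hu ht c f d hs
end

section
/- Let T = {1423, 2341, 3142} (patterns of length 4). Then the generating function for T-avoiders satisfies, as formal power series over ℚ, (1 - 7x + 17x^2 - 20x^3 + 12x^4 - 2x^5)·F_T(x) = 1 - 6x + 12x^2 - 11x^3 + 5x^4; that is, F_T(x) = (1-6x+12x^2-11x^3+5x^4)/(1-7x+17x^2-20x^3+12x^4-2x^5). -/
open PowerSeries

namespace AV

/-- positions `x`, `y` with `π x < π y`. -/
def Bf {n : ℕ} (p : Equiv.Perm (Fin n)) (x y : ℕ) : Prop :=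
  ∃ (hx : x < n) (hy : y < n), p ⟨x, hx⟩ < p ⟨y, hy⟩

def dn (v x : ℕ) : ℕ := if x < v then x else x - 1

def ext {n : ℕ} (p : Equiv.Perm (Fin n)) (v : Fin (n+1)) : Equiv.Perm (Fin (n+1)) :=
  (finSuccEquiv' v).trans ((Equiv.optionCongr p).trans (finSuccEquiv' (Fin.last n)).symm)

lemma ext_self {n : ℕ} (p : Equiv.Perm (Fin n)) (v : Fin (n+1)) : ext p v v = Fin.last n := by
  simp [ext]

lemma ext_succAbove {n : ℕ} (p : Equiv.Perm (Fin n)) (v : Fin (n+1)) (i : Fin n) :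
    ext p v (v.succAbove i) = (p i).castSucc := by
  simp [ext]

lemma ext_bij (n : ℕ) : Function.Bijective
    (fun q : Equiv.Perm (Fin n) × Fin (n+1) => ext q.1 q.2) := by
  rw [Fintype.bijective_iff_injective_and_card]
  constructor
  · rintro ⟨p, v⟩ ⟨q, w⟩ h
    simp only at h
    have hv : v = w := by
      apply (ext q w).injective
      rw [ext_self, ← h, ext_self]
    subst hv
    congr 1
    ext i
    have := ext_succAbove p v i
    rw [h, ext_succAbove] at this
    have := Fin.castSucc_injective _ this
    rw [this]
  · simp [Fintype.card_perm, Nat.factorial_succ, mul_comm]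

lemma ext_val {n : ℕ} (p : Equiv.Perm (Fin n)) (v : Fin (n+1)) (x : ℕ) (hx : x < n + 1)
    (h : x ≠ v) : ∃ h' : dn v x < n, ext p v ⟨x, hx⟩ = (p ⟨dn v x, h'⟩).castSucc := by
  have h' : dn v x < n := by unfold dn; split_ifs <;> omega
  refine ⟨h', ?_⟩
  rw [← ext_succAbove p v]
  congr 1
  ext
  simp only [Fin.succAbove, dn, Fin.lt_def, Fin.val_castSucc]
  split_ifs <;> simp <;> omega

lemma bf_ext {n : ℕ} (p : Equiv.Perm (Fin n)) (v : Fin (n+1)) (x y : ℕ) :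
    Bf (ext p v) x y ↔ (y = v ∧ x ≠ v ∧ x < n + 1) ∨
      (x ≠ v ∧ y ≠ v ∧ Bf p (dn v x) (dn v y)) := by
  constructor
  · rintro ⟨hx, hy, h⟩
    by_cases hxv : x = v
    · have : ext p v ⟨x, hx⟩ = Fin.last n := by
        rw [← ext_self p v]; congr 1; ext; exact hxv
      rw [this] at h
      exact absurd h (not_lt.2 (Fin.le_last _))
    by_cases hyv : y = v
    · exact Or.inl ⟨hyv, hxv, hx⟩
    obtain ⟨hx', ex⟩ := ext_val p v x hx hxv
    obtain ⟨hy', ey⟩ := ext_val p v y hy hyv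
    rw [ex, ey] at h
    exact Or.inr ⟨hxv, hyv, hx', hy', by simpa using h⟩
  · rintro (⟨hy, hxv, hx⟩ | ⟨hxv, hyv, hx', hy', h⟩)
    · subst hy
      refine ⟨hx, v.2, ?_⟩
      obtain ⟨hx', ex⟩ := ext_val p v x hx hxv
      rw [ex, Fin.eta, ext_self]
      exact Fin.castSucc_lt_last _
    · have hx : x < n + 1 := by unfold dn at hx'; split_ifs at hx' <;> omega
      have hy : y < n + 1 := by unfold dn at hy'; split_ifs at hy' <;> omega
      refine ⟨hx, hy, ?_⟩
      obtain ⟨hx', ex⟩ := ext_val p v x hx hxv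
      obtain ⟨hy', ey⟩ := ext_val p v y hy hyv
      rw [ex, ey]
      simpa using h

def Av (b : ℕ → ℕ → Prop) : Prop :=
  ∀ x y z w, x < y → y < z → z < w →
    ¬ (b x z ∧ b z w ∧ b w y) ∧ ¬ (b w x ∧ b x y ∧ b y z) ∧ ¬ (b y w ∧ b w x ∧ b x z)

structure Act (b : ℕ → ℕ → Prop) (w : ℕ) : Prop where
  a1 : ∀ x y z, x < w → w ≤ y → y < z → b x y → b y z → False
  a2 : ∀ x y z, y < z → z < w → w ≤ x → b x y → b y z → False
  a3 : ∀ x y z, z < x → x < w → w ≤ y → b x y → b y z → False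

structure Ext (n v : ℕ) (b b' : ℕ → ℕ → Prop) : Prop where
  hv : v ≤ n
  lt : ∀ x y, b x y → x < n ∧ y < n ∧ x ≠ y
  tot : ∀ x y, x < n → y < n → x ≠ y → b x y ∨ b y x
  asym : ∀ x y, b x y → ¬ b y x
  h1 : ∀ x, x < n → b' (if x < v then x else x + 1) v
  h2 : ∀ y, ¬ b' v y
  h3 : ∀ x y, b' (if x < v then x else x + 1) (if y < v then y else y + 1) ↔ b x y
  h4 : ∀ x y, b' x y → x < n + 1 ∧ y < n + 1

lemma ext_Ext {n : ℕ} (p : Equiv.Perm (Fin n)) (v : Fin (n+1)) :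
    Ext n v (Bf p) (Bf (ext p v)) := by
  have key : ∀ x : ℕ, dn v (if x < v then x else x + 1) = x := by
    intro x; unfold dn; split_ifs <;> omega
  have key2 : ∀ x : ℕ, (if x < v then x else x + 1) ≠ (v : ℕ) := by
    intro x; split_ifs <;> omega
  refine ⟨by omega, ?_, ?_, ?_, ?_, ?_, ?_, ?_⟩
  · rintro x y ⟨hx, hy, h⟩
    refine ⟨hx, hy, ?_⟩
    rintro rfl
    exact lt_irrefl _ h
  · intro x y hx hy hxy
    rcases lt_trichotomy (p ⟨x, hx⟩) (p ⟨y, hy⟩) with h | h | h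
    · exact Or.inl ⟨hx, hy, h⟩
    · have := p.injective h
      simp at this
      exact absurd this hxy
    · exact Or.inr ⟨hy, hx, h⟩
  · rintro x y ⟨hx, hy, h⟩ ⟨_, _, h'⟩
    exact lt_asymm h h'
  · intro x hx
    rw [bf_ext]
    left
    refine ⟨rfl, key2 x, ?_⟩
    split_ifs <;> omega
  · intro y
    rw [bf_ext]
    rintro (h | h) <;> tauto
  · intro x y
    rw [bf_ext, key, key]
    have := key2 x
    have := key2 y
    tauto
  · rintro x y ⟨hx, hy, -⟩
    exact ⟨hx, hy⟩

namespace Ext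
variable {n v : ℕ} {b b' : ℕ → ℕ → Prop}

lemma ll (e : Ext n v b b') {x y : ℕ} (hx : x < v) (hy : y < v) : b' x y ↔ b x y := by
  have := e.h3 x y; simpa [hx, hy, not_lt.2] using this
lemma lg (e : Ext n v b b') {x y : ℕ} (hx : x < v) (hy : v ≤ y) : b' x (y+1) ↔ b x y := by
  have := e.h3 x y; simpa [hx, hy, not_lt.2] using this
lemma gl (e : Ext n v b b') {x y : ℕ} (hx : v ≤ x) (hy : y < v) : b' (x+1) y ↔ b x y := by
  have := e.h3 x y; simpa [hx, hy, not_lt.2] using this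
lemma gg (e : Ext n v b b') {x y : ℕ} (hx : v ≤ x) (hy : v ≤ y) : b' (x+1) (y+1) ↔ b x y := by
  have := e.h3 x y; simpa [hx, hy, not_lt.2] using this
lemma lv (e : Ext n v b b') {x : ℕ} (hx : x < v) : b' x v := by
  have := e.hv
  have := e.h1 x (by omega); simpa [hx] using this
lemma gv (e : Ext n v b b') {x : ℕ} (hx : v ≤ x) (h : x < n) : b' (x+1) v := by
  have := e.h1 x h; simpa [hx, not_lt.2] using this
lemma vx (e : Ext n v b b') {y : ℕ} : ¬ b' v y := e.h2 y

lemma vx' (e : Ext n v b b') {x y : ℕ} (h : x = v) : ¬ b' x y := by subst h; exact e.h2 y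

/-- case split -/
lemma cs (v x : ℕ) : x < v ∨ x = v ∨ ∃ y, x = y + 1 ∧ v ≤ y := by
  rcases lt_trichotomy x v with h | h | h
  · exact Or.inl h
  · exact Or.inr (Or.inl h)
  · exact Or.inr (Or.inr ⟨x - 1, by omega, by omega⟩)

lemma av (e : Ext n v b b') : Av b' ↔ Av b ∧ Act b v := by
  constructor
  · intro h
    refine ⟨?_, ?_, ?_, ?_⟩
    · intro x y z w hxy hyz hzw
      have := h (if x < v then x else x + 1) (if y < v then y else y + 1)
        (if z < v then z else z + 1) (if w < v then w else w + 1)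
        (by split_ifs <;> omega) (by split_ifs <;> omega) (by split_ifs <;> omega)
      simpa only [e.h3] using this
    · intro x y z h1 h2 h3 h4 h5
      refine (h x v (y+1) (z+1) h1 (by omega) (by omega)).1 ⟨(e.lg h1 h2).2 h4, (e.gg h2 (by omega)).2 h5, e.gv (by omega) (e.lt _ _ h5).2.1⟩
    · intro x y z h1 h2 h3 h4 h5
      exact (h y z v (x+1) h1 h2 (by omega)).2.1 ⟨(e.gl h3 (by omega)).2 h4, (e.ll (by omega) h2).2 h5, e.lv h2⟩
    · intro x y z h1 h2 h3 h4 h5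
      exact (h z x v (y+1) h1 h2 (by omega)).2.2 ⟨(e.lg h2 h3).2 h4, (e.gl h3 (by omega)).2 h5, e.lv (by omega)⟩
  · rintro ⟨h, ha⟩ x y z w hxy hyz hzw
    refine ⟨?_, ?_, ?_⟩
    · rintro ⟨h1, h2, h3⟩
      rcases cs v x with hx | hx | ⟨x, rfl, hx⟩
      all_goals rcases cs v y with hy | hy | ⟨y, rfl, hy⟩
      all_goals rcases cs v z with hz | hz | ⟨z, rfl, hz⟩
      all_goals rcases cs v w with hw | hw | ⟨w, rfl, hw⟩
      all_goals first
        | (exfalso; omega)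
        | exact e.vx' (by assumption) h1
        | exact e.vx' (by assumption) h2
        | exact e.vx' (by assumption) h3
        | skip
      all_goals try simp (disch := omega) only [e.ll, e.lg, e.gl, e.gg] at h1 h2 h3
      all_goals first
        | exact (h _ _ _ _ (by omega) (by omega) (by omega)).1 ⟨h1, h2, h3⟩
        | exact ha.a1 _ _ _ (by omega) (by omega) (by omega) h1 h2
    · rintro ⟨h1, h2, h3⟩
      rcases cs v x with hx | hx | ⟨x, rfl, hx⟩
      all_goals rcases cs v y with hy | hy | ⟨y, rfl, hy⟩
      all_goals rcases cs v z with hz | hz | ⟨z, rfl, hz⟩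
      all_goals rcases cs v w with hw | hw | ⟨w, rfl, hw⟩
      all_goals first
        | (exfalso; omega)
        | exact e.vx' (by assumption) h1
        | exact e.vx' (by assumption) h2
        | exact e.vx' (by assumption) h3
        | skip
      all_goals try simp (disch := omega) only [e.ll, e.lg, e.gl, e.gg] at h1 h2 h3
      all_goals first
        | exact (h _ _ _ _ (by omega) (by omega) (by omega)).2.1 ⟨h1, h2, h3⟩
        | exact ha.a2 _ _ _ (by omega) (by omega) (by omega) h1 h2
    · rintro ⟨h1, h2, h3⟩
      rcases cs v x with hx | hx | ⟨x, rfl, hx⟩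
      all_goals rcases cs v y with hy | hy | ⟨y, rfl, hy⟩
      all_goals rcases cs v z with hz | hz | ⟨z, rfl, hz⟩
      all_goals rcases cs v w with hw | hw | ⟨w, rfl, hw⟩
      all_goals first
        | (exfalso; omega)
        | exact e.vx' (by assumption) h1
        | exact e.vx' (by assumption) h2
        | exact e.vx' (by assumption) h3
        | skip
      all_goals try simp (disch := omega) only [e.ll, e.lg, e.gl, e.gg] at h1 h2 h3
      all_goals first
        | exact (h _ _ _ _ (by omega) (by omega) (by omega)).2.2 ⟨h1, h2, h3⟩
        | exact ha.a3 _ _ _ (by omega) (by omega) (by omega) h1 h2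

/-- lower gaps -/
lemma act_lo (e : Ext n v b b') {w : ℕ} (hw : w ≤ v) :
    Act b' w ↔ Act b w ∧ ∀ x y, x < w → w ≤ y → y < v → ¬ b x y := by
  constructor
  · intro h
    refine ⟨⟨?_, ?_, ?_⟩, ?_⟩
    · intro x y z h1 h2 h3 h4 h5
      exact h.a1 (if x < v then x else x + 1) (if y < v then y else y + 1)
        (if z < v then z else z + 1) (by split_ifs <;> omega) (by split_ifs <;> omega)
        (by split_ifs <;> omega) ((e.h3 _ _).2 h4) ((e.h3 _ _).2 h5)
    · intro x y z h1 h2 h3 h4 h5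
      exact h.a2 (if x < v then x else x + 1) (if y < v then y else y + 1)
        (if z < v then z else z + 1) (by split_ifs <;> omega) (by split_ifs <;> omega)
        (by split_ifs <;> omega) ((e.h3 _ _).2 h4) ((e.h3 _ _).2 h5)
    · intro x y z h1 h2 h3 h4 h5
      exact h.a3 (if x < v then x else x + 1) (if y < v then y else y + 1)
        (if z < v then z else z + 1) (by split_ifs <;> omega) (by split_ifs <;> omega)
        (by split_ifs <;> omega) ((e.h3 _ _).2 h4) ((e.h3 _ _).2 h5)
    · intro x y h1 h2 h3 h4
      exact h.a1 x y v h1 h2 h3 ((e.ll (by omega) h3).2 h4) (e.lv h3)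
  · rintro ⟨h, hk⟩
    refine ⟨?_, ?_, ?_⟩
    all_goals
      intro x y z h1 h2 h3 h4 h5
      rcases cs v x with hx | hx | ⟨x, rfl, hx⟩
    all_goals rcases cs v y with hy | hy | ⟨y, rfl, hy⟩
    all_goals rcases cs v z with hz | hz | ⟨z, rfl, hz⟩
    all_goals first
        | (exfalso; omega)
        | exact e.vx' (by assumption) h4
        | exact e.vx' (by assumption) h5
        | skip
    all_goals try simp (disch := omega) only [e.ll, e.lg, e.gl, e.gg] at h4 h5
    all_goals first
        | exact h.a1 _ _ _ (by omega) (by omega) (by omega) h4 h5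
        | exact h.a2 _ _ _ (by omega) (by omega) (by omega) h4 h5
        | exact h.a3 _ _ _ (by omega) (by omega) (by omega) h4 h5
        | exact hk _ _ (by omega) (by omega) (by omega) h4

/-- upper gaps -/
lemma act_hi (e : Ext n v b b') {w : ℕ} (hw : v ≤ w) :
    Act b' (w+1) ↔ Act b w ∧ (∀ x y, y < v → w ≤ x → ¬ b x y) ∧
      (∀ x y, v ≤ x → x < w → w ≤ y → ¬ b x y) := by
  constructor
  · intro h
    refine ⟨⟨?_, ?_, ?_⟩, ?_, ?_⟩
    · intro x y z h1 h2 h3 h4 h5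
      exact h.a1 (if x < v then x else x + 1) (if y < v then y else y + 1)
        (if z < v then z else z + 1) (by split_ifs <;> omega) (by split_ifs <;> omega)
        (by split_ifs <;> omega) ((e.h3 _ _).2 h4) ((e.h3 _ _).2 h5)
    · intro x y z h1 h2 h3 h4 h5
      exact h.a2 (if x < v then x else x + 1) (if y < v then y else y + 1)
        (if z < v then z else z + 1) (by split_ifs <;> omega) (by split_ifs <;> omega)
        (by split_ifs <;> omega) ((e.h3 _ _).2 h4) ((e.h3 _ _).2 h5)
    · intro x y z h1 h2 h3 h4 h5
      exact h.a3 (if x < v then x else x + 1) (if y < v then y else y + 1)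
        (if z < v then z else z + 1) (by split_ifs <;> omega) (by split_ifs <;> omega)
        (by split_ifs <;> omega) ((e.h3 _ _).2 h4) ((e.h3 _ _).2 h5)
    · intro x y h1 h2 h4
      exact h.a2 (x+1) y v h1 (by omega) (by omega) ((e.gl (by omega) h1).2 h4) (e.lv h1)
    · intro x y h1 h2 h3 h4
      exact h.a3 (x+1) (y+1) v (by omega) (by omega) (by omega)
        ((e.gg h1 (by omega)).2 h4) (e.gv (by omega) (e.lt _ _ h4).2.1)
  · rintro ⟨h, hk, hk'⟩
    refine ⟨?_, ?_, ?_⟩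
    all_goals
      intro x y z h1 h2 h3 h4 h5
      rcases cs v x with hx | hx | ⟨x, rfl, hx⟩
    all_goals rcases cs v y with hy | hy | ⟨y, rfl, hy⟩
    all_goals rcases cs v z with hz | hz | ⟨z, rfl, hz⟩
    all_goals first
        | (exfalso; omega)
        | exact e.vx' (by assumption) h4
        | exact e.vx' (by assumption) h5
        | skip
    all_goals try simp (disch := omega) only [e.ll, e.lg, e.gl, e.gg] at h4 h5
    all_goals first
        | exact h.a1 _ _ _ (by omega) (by omega) (by omega) h4 h5
        | exact h.a2 _ _ _ (by omega) (by omega) (by omega) h4 h5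
        | exact h.a3 _ _ _ (by omega) (by omega) (by omega) h4 h5
        | exact hk _ _ (by omega) (by omega) h4
        | exact hk' _ _ (by omega) (by omega) (by omega) h4

end Ext

structure LD (n : ℕ) (b : ℕ → ℕ → Prop) (s : ℕ) : Prop where
  hn : s + 1 ≤ n
  r : ∀ x y, x < s → x < y → y < n → b y x
  act : ∀ w, w ≤ n → (Act b w ↔ w ≤ s ∨ w = n)

structure LB (n : ℕ) (b : ℕ → ℕ → Prop) (s : ℕ) : Prop where
  hs : 1 ≤ s
  hn : s + 1 ≤ n
  r1 : ∀ x y, x < y → y < s → b y x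
  r2 : ∀ x, x < s → ∃ y, s ≤ y ∧ b y x
  r3 : ∀ x, x < s → ∃ y, s ≤ y ∧ b x y
  act : ∀ w, w ≤ n → (Act b w ↔ w ≤ s ∨ w = n)

structure LC (n : ℕ) (b : ℕ → ℕ → Prop) (c : ℕ) : Prop where
  hc : 0 < c
  hn : c < n
  r1 : ∃ x y, x < c ∧ c ≤ y ∧ b x y
  r2 : ∃ x y, x < c ∧ c ≤ y ∧ b y x
  act : ∀ w, w ≤ n → (Act b w ↔ w = 0 ∨ w = c ∨ w = n)

structure LG (n : ℕ) (b : ℕ → ℕ → Prop) (s t : ℕ) : Prop where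
  hn : s + t + 2 ≤ n
  r1 : ∀ x y, x < s → x < y → y + t + 1 < n → b y x
  r2 : ∀ x y, n ≤ x + t + 1 → x < y → y < n → b y x
  r3 : ∀ x y, x + t + 1 < n → n ≤ y + t + 1 → y < n → b x y
  act : ∀ w, w ≤ n → (Act b w ↔ w ≤ s ∨ n ≤ w + t + 1)

lemma lohi {v : ℕ} {P : ℕ → Prop} (n : ℕ) (h1 : ∀ w, w ≤ v → w ≤ n + 1 → P w)
    (h2 : ∀ w, v ≤ w → w ≤ n → P (w+1)) (w : ℕ) (hw : w ≤ n + 1) : P w := by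
  by_cases h : w ≤ v
  · exact h1 w h hw
  · obtain ⟨u, rfl⟩ : ∃ u, w = u + 1 := ⟨w - 1, by omega⟩
    exact h2 u (by omega) (by omega)

section
variable {n v s t c : ℕ} {b b' : ℕ → ℕ → Prop}

lemma toD1 (e : Ext n 0 b b') (hn : 1 ≤ n) (h0 : Act b 0) (hA : Act b n)
    (hk : ∀ w, 0 < w → w < n → Act b w → ∃ x y, x < w ∧ w ≤ y ∧ b x y) :
    LD (n+1) b' 1 := by
  refine ⟨by omega, ?_, ?_⟩
  · intro x y hx hxy hy
    obtain rfl : x = 0 := by omega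
    obtain ⟨u, rfl⟩ : ∃ u, y = u + 1 := ⟨y - 1, by omega⟩
    exact e.gv (by omega) (by omega)
  · refine lohi (v := 0) n ?_ ?_
    · intro w h1 h2
      obtain rfl : w = 0 := by omega
      rw [e.act_lo (by omega)]
      refine ⟨fun _ => by omega, fun _ => ⟨h0, fun x y h => by omega⟩⟩
    · intro w h1 h2
      rw [e.act_hi (by omega)]
      constructor
      · rintro ⟨ha, -, k⟩
        by_contra hc
        obtain ⟨x, y, hx, hy, hb⟩ := hk w (by omega) (by omega) ha
        exact k x y (by omega) hx hy hb
      · intro h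
        have : w = 0 ∨ w = n := by omega
        rcases this with rfl | rfl
        · exact ⟨h0, fun x y h => by omega, fun x y _ h => by omega⟩
        · exact ⟨hA, fun x y h => by omega, fun x y _ _ h hb => by
            have := e.lt _ _ hb; omega⟩

lemma toG00 (e : Ext n n b b') (hn : 1 ≤ n) (h0 : Act b 0) (hA : Act b n)
    (hk : ∀ w, 0 < w → w < n → Act b w → ∃ x y, x < w ∧ w ≤ y ∧ b x y) :
    LG (n+1) b' 0 0 := by
  refine ⟨by omega, ?_, ?_, ?_, ?_⟩
  · intro x y hx; omega
  · intro x y hx; omega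
  · intro x y hx h1 h2
    obtain rfl : y = n := by omega
    exact e.lv (by omega)
  · refine lohi (v := n) n ?_ ?_
    · intro w h1 h2
      rw [e.act_lo (by omega)]
      constructor
      · rintro ⟨ha, k⟩
        by_contra hc
        obtain ⟨x, y, hx, hy, hb⟩ := hk w (by omega) (by omega) ha
        exact k x y hx hy (e.lt _ _ hb).2.1 hb
      · intro h
        have : w = 0 ∨ w = n := by omega
        rcases this with rfl | rfl
        · exact ⟨h0, fun x y h => by omega⟩
        · exact ⟨hA, fun x y h => by omega⟩
    · intro w h1 h2
      obtain rfl : w = n := by omega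
      rw [e.act_hi (by omega)]
      refine ⟨fun _ => by omega, fun _ => ⟨hA, fun x y _ h hb => ?_, fun x y _ _ h => by omega⟩⟩
      have := e.lt _ _ hb; omega

lemma LD.zero (h : LD n b s) (e : Ext n 0 b b') : LD (n+1) b' (s+1) := by
  have hn := h.hn
  refine ⟨by omega, ?_, ?_⟩
  · intro x y hx hxy hy
    obtain ⟨u, rfl⟩ : ∃ u, y = u + 1 := ⟨y - 1, by omega⟩
    rcases Nat.eq_zero_or_pos x with rfl | hx0
    · exact e.gv (by omega) (by omega)
    · obtain ⟨x, rfl⟩ : ∃ u, x = u + 1 := ⟨x - 1, by omega⟩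
      exact (e.gg (by omega) (by omega)).2 (h.r _ _ (by omega) (by omega) (by omega))
  · refine lohi (v := 0) n ?_ ?_
    · intro w h1 h2
      obtain rfl : w = 0 := by omega
      rw [e.act_lo (by omega), h.act _ (by omega)]
      refine ⟨fun _ => by omega, fun _ => ⟨by omega, fun x y h => by omega⟩⟩
    · intro w h1 h2
      rw [e.act_hi (by omega), h.act _ (by omega)]
      constructor
      · omega
      · intro hw
        refine ⟨by omega, fun x y h => by omega, fun x y h1 h2 h3 hb => ?_⟩
        have := e.lt _ _ hb
        exact e.asym _ _ hb (h.r x y (by omega) (by omega) (by omega))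

lemma LD.mid (h : LD n b s) (e : Ext n v b b') (h1 : 1 ≤ v) (h2 : v ≤ s) : LB (n+1) b' v := by
  have hn := h.hn
  refine ⟨by omega, by omega, ?_, ?_, ?_, ?_⟩
  · intro x y hx hy
    exact (e.ll (by omega) (by omega)).2 (h.r _ _ (by omega) (by omega) (by omega))
  · intro x hx
    exact ⟨v + 1, by omega, (e.gl (by omega) (by omega)).2 (h.r _ _ (by omega) (by omega) (by omega))⟩
  · intro x hx
    exact ⟨v, le_rfl, e.lv hx⟩
  · refine lohi (v := v) n ?_ ?_
    · intro w h1 h2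
      rw [e.act_lo (by omega), h.act _ (by omega)]
      refine ⟨fun _ => by omega, fun _ => ⟨by omega, fun x y h1 h2 h3 hb => ?_⟩⟩
      exact e.asym _ _ hb (h.r x y (by omega) (by omega) (by omega))
    · intro w h1 h2
      rw [e.act_hi (by omega), h.act _ (by omega)]
      constructor
      · rintro ⟨ha, k, -⟩
        by_contra hc
        exact k w 0 (by omega) le_rfl (h.r 0 w (by omega) (by omega) (by omega))
      · intro hw
        refine ⟨by omega, fun x y h1 h2 hb => ?_, fun x y h1 h2 h3 hb => ?_⟩ <;>
        · have := e.lt _ _ hb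
          omega

lemma LD.top (h : LD n b s) (e : Ext n n b b') : LG (n+1) b' s 0 := by
  have hn := h.hn
  refine ⟨by omega, ?_, ?_, ?_, ?_⟩
  · intro x y hx h1 h2
    exact (e.ll (by omega) (by omega)).2 (h.r _ _ (by omega) (by omega) (by omega))
  · intro x y hx; omega
  · intro x y hx h1 h2
    obtain rfl : y = n := by omega
    exact e.lv (by omega)
  · refine lohi (v := n) n ?_ ?_
    · intro w h1 h2
      rw [e.act_lo (by omega), h.act _ (by omega)]
      constructor
      · omega
      · intro hw
        refine ⟨by omega, fun x y h1 h2 h3 hb => ?_⟩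
        exact e.asym _ _ hb (h.r x y (by omega) (by omega) (by omega))
    · intro w h1 h2
      obtain rfl : w = n := by omega
      rw [e.act_hi (by omega), h.act _ (by omega)]
      refine ⟨fun _ => by omega, fun _ => ⟨by omega, fun x y _ h hb => ?_, fun x y _ _ h => by omega⟩⟩
      have := e.lt _ _ hb; omega

lemma LB.kill (h : LB n b s) : ∀ w, 0 < w → w < n → Act b w → ∃ x y, x < w ∧ w ≤ y ∧ b x y := by
  intro w h1 h2 ha
  have := (h.act w (by omega)).1 ha
  obtain ⟨y, hy, hb⟩ := h.r3 (w-1) (by omega)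
  exact ⟨w-1, y, by omega, by omega, hb⟩

lemma LB.zero (h : LB n b s) (e : Ext n 0 b b') : LD (n+1) b' 1 :=
  toD1 e (by have := h.hn; omega) ((h.act _ (by omega)).2 (by omega))
    ((h.act _ (by omega)).2 (by omega)) h.kill

lemma LB.top (h : LB n b s) (e : Ext n n b b') : LG (n+1) b' 0 0 :=
  toG00 e (by have := h.hn; omega) ((h.act _ (by omega)).2 (by omega))
    ((h.act _ (by omega)).2 (by omega)) h.kill

lemma LB.mid (h : LB n b s) (e : Ext n v b b') (h1 : 1 ≤ v) (h2 : v ≤ s) : LB (n+1) b' v := by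
  have hn := h.hn
  refine ⟨by omega, by omega, ?_, ?_, ?_, ?_⟩
  · intro x y hx hy
    exact (e.ll (by omega) (by omega)).2 (h.r1 _ _ (by omega) (by omega))
  · intro x hx
    obtain ⟨y, hy, hb⟩ := h.r2 x (by omega)
    exact ⟨y + 1, by omega, (e.gl (by omega) (by omega)).2 hb⟩
  · intro x hx
    exact ⟨v, le_rfl, e.lv hx⟩
  · refine lohi (v := v) n ?_ ?_
    · intro w h1 h2
      rw [e.act_lo (by omega), h.act _ (by omega)]
      refine ⟨fun _ => by omega, fun _ => ⟨by omega, fun x y h1 h2 h3 hb => ?_⟩⟩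
      exact e.asym _ _ hb (h.r1 x y (by omega) (by omega))
    · intro w h1 h2
      rw [e.act_hi (by omega), h.act _ (by omega)]
      constructor
      · rintro ⟨ha, k, -⟩
        by_contra hc
        obtain ⟨y, hy, hb⟩ := h.r2 0 (by omega)
        exact k y 0 (by omega) (by omega) hb
      · intro hw
        refine ⟨by omega, fun x y h1 h2 hb => ?_, fun x y h1 h2 h3 hb => ?_⟩ <;>
        · have := e.lt _ _ hb
          omega

lemma LC.kill (h : LC n b c) : ∀ w, 0 < w → w < n → Act b w → ∃ x y, x < w ∧ w ≤ y ∧ b x y := by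
  intro w h1 h2 ha
  have := (h.act w (by omega)).1 ha
  obtain rfl : w = c := by omega
  exact h.r1

lemma LC.zero (h : LC n b c) (e : Ext n 0 b b') : LD (n+1) b' 1 :=
  toD1 e (by have := h.hn; omega) ((h.act _ (by omega)).2 (by omega))
    ((h.act _ (by omega)).2 (by omega)) h.kill

lemma LC.top (h : LC n b c) (e : Ext n n b b') : LG (n+1) b' 0 0 :=
  toG00 e (by have := h.hn; omega) ((h.act _ (by omega)).2 (by omega))
    ((h.act _ (by omega)).2 (by omega)) h.kill

lemma LC.mid (h : LC n b c) (e : Ext n c b b') : LC (n+1) b' c := by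
  have hn := h.hn
  have hc := h.hc
  refine ⟨hc, by omega, ⟨0, c, hc, le_rfl, e.lv hc⟩, ?_, ?_⟩
  · obtain ⟨x, y, hx, hy, hb⟩ := h.r2
    exact ⟨x, y + 1, hx, by omega, (e.gl hy hx).2 hb⟩
  · refine lohi (v := c) n ?_ ?_
    · intro w h1 h2
      rw [e.act_lo (by omega), h.act _ (by omega)]
      refine ⟨fun _ => by omega, fun _ => ⟨by omega, fun x y h1 h2 h3 hb => by omega⟩⟩
    · intro w h1 h2
      rw [e.act_hi (by omega), h.act _ (by omega)]
      constructor
      · rintro ⟨ha, k, -⟩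
        by_contra hc
        obtain ⟨x, y, hx, hy, hb⟩ := h.r2
        exact k y x (by omega) (by omega) hb
      · intro hw
        refine ⟨by omega, fun x y h1 h2 hb => ?_, fun x y h1 h2 h3 hb => ?_⟩ <;>
        · have := e.lt _ _ hb
          omega

lemma LG.kill (h : LG n b s t) :
    ∀ w, 0 < w → w < n → Act b w → ∃ x y, x < w ∧ w ≤ y ∧ b x y := by
  intro w h1 h2 ha
  have := h.hn
  exact ⟨0, n - 1, by omega, by omega, h.r3 _ _ (by omega) (by omega) (by omega)⟩

lemma LG.zero (h : LG n b s t) (e : Ext n 0 b b') : LD (n+1) b' 1 :=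
  toD1 e (by have := h.hn; omega) ((h.act _ (by omega)).2 (by omega))
    ((h.act _ (by omega)).2 (by omega)) h.kill

lemma LG.top (h : LG n b s t) (e : Ext n n b b') : LG (n+1) b' 0 0 :=
  toG00 e (by have := h.hn; omega) ((h.act _ (by omega)).2 (by omega))
    ((h.act _ (by omega)).2 (by omega)) h.kill

lemma LG.mid (h : LG n b s t) (e : Ext n v b b') (h1 : 1 ≤ v) (h2 : v ≤ s) :
    LB (n+1) b' v := by
  have hn := h.hn
  refine ⟨by omega, by omega, ?_, ?_, ?_, ?_⟩
  · intro x y hx hy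
    exact (e.ll (by omega) (by omega)).2 (h.r1 _ _ (by omega) (by omega) (by omega))
  · intro x hx
    exact ⟨v + 1, by omega, (e.gl (by omega) (by omega)).2 (h.r1 _ _ (by omega) (by omega) (by omega))⟩
  · intro x hx
    exact ⟨v, le_rfl, e.lv hx⟩
  · refine lohi (v := v) n ?_ ?_
    · intro w h1 h2
      rw [e.act_lo (by omega), h.act _ (by omega)]
      refine ⟨fun _ => by omega, fun _ => ⟨by omega, fun x y h1 h2 h3 hb => ?_⟩⟩
      exact e.asym _ _ hb (h.r1 x y (by omega) (by omega) (by omega))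
    · intro w h1 h2
      rw [e.act_hi (by omega), h.act _ (by omega)]
      constructor
      · rintro ⟨ha, k, k'⟩
        by_contra hc
        by_cases hw : w ≤ s
        · exact k w 0 (by omega) le_rfl (h.r1 0 w (by omega) (by omega) (by omega))
        · exact k' v (n-1) le_rfl (by omega) (by omega) (h.r3 _ _ (by omega) (by omega) (by omega))
      · intro hw
        refine ⟨by omega, fun x y h1 h2 hb => ?_, fun x y h1 h2 h3 hb => ?_⟩ <;>
        · have := e.lt _ _ hb
          omega

lemma LG.grow (h : LG n b s t) (e : Ext n v b b') (hv : v + t + 1 = n) :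
    LG (n+1) b' s (t+1) := by
  have hn := h.hn
  refine ⟨by omega, ?_, ?_, ?_, ?_⟩
  · intro x y hx h1 h2
    exact (e.ll (by omega) (by omega)).2 (h.r1 _ _ (by omega) (by omega) (by omega))
  · intro x y hx h1 h2
    obtain ⟨y, rfl⟩ : ∃ u, y = u + 1 := ⟨y - 1, by omega⟩
    by_cases hxv : x = v
    · subst hxv
      exact e.gv (by omega) (by omega)
    · obtain ⟨x, rfl⟩ : ∃ u, x = u + 1 := ⟨x - 1, by omega⟩
      exact (e.gg (by omega) (by omega)).2 (h.r2 _ _ (by omega) (by omega) (by omega))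
  · intro x y hx h1 h2
    by_cases hyv : y = v
    · subst hyv
      exact e.lv (by omega)
    · obtain ⟨y, rfl⟩ : ∃ u, y = u + 1 := ⟨y - 1, by omega⟩
      exact (e.lg (by omega) (by omega)).2 (h.r3 _ _ (by omega) (by omega) (by omega))
  · refine lohi (v := v) n ?_ ?_
    · intro w h1 h2
      rw [e.act_lo (by omega), h.act _ (by omega)]
      constructor
      · omega
      · intro hw
        refine ⟨by omega, fun x y h1 h2 h3 hb => ?_⟩
        exact e.asym _ _ hb (h.r1 x y (by omega) (by omega) (by omega))
    · intro w h1 h2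
      rw [e.act_hi (by omega), h.act _ (by omega)]
      refine ⟨fun _ => by omega, fun _ => ⟨by omega, fun x y h1 h2 hb => ?_,
        fun x y h1 h2 h3 hb => ?_⟩⟩
      · have := e.lt _ _ hb
        exact e.asym _ _ hb (h.r3 _ _ (by omega) (by omega) (by omega))
      · have := e.lt _ _ hb
        exact e.asym _ _ hb (h.r2 _ _ (by omega) (by omega) (by omega))

lemma LG.hi (h : LG n b s t) (e : Ext n v b b') (hv : n ≤ v + t) (hv' : v < n) :
    LC (n+1) b' v := by
  have hn := h.hn
  have hb1 : b (n-1) (n-t-1) := h.r2 _ _ (by omega) (by omega) (by omega)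
  refine ⟨by omega, by omega, ⟨0, v, by omega, le_rfl, e.lv (by omega)⟩,
    ⟨n-t-1, n-1+1, by omega, by omega, (e.gl (by omega) (by omega)).2 hb1⟩, ?_⟩
  refine lohi (v := v) n ?_ ?_
  · intro w h1 h2
    rw [e.act_lo (by omega), h.act _ (by omega)]
    constructor
    · rintro ⟨ha, k⟩
      by_contra hc
      exact k 0 (v-1) (by omega) (by omega) (by omega) (h.r3 _ _ (by omega) (by omega) (by omega))
    · intro hw
      exact ⟨by omega, fun x y h1 h2 h3 hb => by omega⟩
  · intro w h1 h2
    rw [e.act_hi (by omega), h.act _ (by omega)]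
    constructor
    · rintro ⟨ha, k, -⟩
      by_contra hc
      exact k (n-1) (n-t-1) (by omega) (by omega) hb1
    · intro hw
      refine ⟨by omega, fun x y h1 h2 hb => ?_, fun x y h1 h2 h3 hb => ?_⟩ <;>
      · have := e.lt _ _ hb
        omega
end

inductive Lab
  | D (s : ℕ)
  | B (s : ℕ)
  | G (s t : ℕ)

def f : ℕ → Lab → ℕ
  | 0, _ => 1
  | d+1, .D s => f d (.D (s+1)) + ∑ v ∈ Finset.range s, f d (.B (v+1)) + f d (.G s 0)
  | d+1, .B s => f d (.D 1) + ∑ v ∈ Finset.range s, f d (.B (v+1)) + f d (.G 0 0)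
  | d+1, .G s t => f d (.D 1) + ∑ v ∈ Finset.range s, f d (.B (v+1)) + f d (.G s (t+1))
      + t * f d (.B 1) + f d (.G 0 0)

open Classical in
noncomputable def desc : ℕ → (n : ℕ) → Equiv.Perm (Fin n) → ℕ
  | 0, _, _ => 1
  | d+1, n, p => ∑ v : Fin (n+1), if Av (Bf (ext p v)) then desc d (n+1) (ext p v) else 0

lemma sumD (F : ℕ → ℕ) (Bv : ℕ → ℕ) (n s a c : ℕ) (hs : s + 1 ≤ n) (h0 : F 0 = a)
    (h1 : ∀ v, 1 ≤ v → v ≤ s → F v = Bv v) (h2 : F n = c)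
    (h3 : ∀ v, s < v → v < n → F v = 0) :
    ∑ v ∈ Finset.range (n+1), F v = a + ∑ v ∈ Finset.range s, Bv (v+1) + c := by
  obtain ⟨e, rfl⟩ : ∃ e, n = s + 1 + e := ⟨n - (s+1), by omega⟩
  rw [Finset.sum_range_succ, h2, Finset.sum_range_add, Finset.sum_range_succ', h0]
  rw [Finset.sum_eq_zero (s := Finset.range e)]
  · rw [Finset.sum_congr rfl (fun v hv => h1 (v+1) (by omega)
      (by have := Finset.mem_range.1 hv; omega))]
    ring
  · intro x hx
    have := Finset.mem_range.1 hx
    exact h3 _ (by omega) (by omega)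

lemma sumG (F : ℕ → ℕ) (Bv : ℕ → ℕ) (n s t a g c k : ℕ) (hs : s + t + 2 ≤ n) (h0 : F 0 = a)
    (h1 : ∀ v, 1 ≤ v → v ≤ s → F v = Bv v) (h2 : F n = c)
    (h3 : ∀ v, s < v → v + t + 1 < n → F v = 0) (h4 : F (n - t - 1) = g)
    (h5 : ∀ v, n ≤ v + t → v < n → F v = k) :
    ∑ v ∈ Finset.range (n+1), F v
      = a + ∑ v ∈ Finset.range s, Bv (v+1) + g + t * k + c := by
  obtain ⟨m, rfl⟩ : ∃ m, n = m + 1 + t := ⟨n - (t+1), by omega⟩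
  rw [Finset.sum_range_succ, h2, Finset.sum_range_add,
    sumD F Bv m s a g (by omega) h0 h1 (by rw [← h4]; congr 1; omega)
      (fun v hv hv' => h3 v hv (by omega))]
  rw [Finset.sum_congr rfl (fun v hv => h5 (m+1+v) (by omega)
      (by have := Finset.mem_range.1 hv; omega))]
  simp

open Classical in
lemma desc_lab (d : ℕ) : ∀ (n : ℕ) (p : Equiv.Perm (Fin n)), Av (Bf p) →
    (∀ s, LD n (Bf p) s → desc d n p = f d (.D s)) ∧
    (∀ s, LB n (Bf p) s → desc d n p = f d (.B s)) ∧
    (∀ c, LC n (Bf p) c → desc d n p = f d (.B 1)) ∧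
    (∀ s t, LG n (Bf p) s t → desc d n p = f d (.G s t)) := by
  induction d with
  | zero => intro n p _; simp [desc, f]
  | succ d ih =>
    intro n p hp
    obtain ⟨F, hF⟩ : ∃ F : ℕ → ℕ, F = fun v => if h : v < n + 1 then
      (if Av (Bf (ext p ⟨v, h⟩)) then desc d (n+1) (ext p ⟨v, h⟩) else 0) else 0 := ⟨_, rfl⟩
    have hsum : desc (d+1) n p = ∑ v ∈ Finset.range (n+1), F v := by
      rw [Finset.sum_range, desc]
      refine Finset.sum_congr rfl fun v _ => ?_
      have hv : (v : ℕ) < n + 1 := v.2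
      simp only [hF]
      rw [dif_pos hv]
    have hact : ∀ v : ℕ, v ≤ n → Act (Bf p) v → ∃ p' : Equiv.Perm (Fin (n+1)),
        Av (Bf p') ∧ Ext n v (Bf p) (Bf p') ∧ F v = desc d (n+1) p' := by
      intro v hv ha
      have e := ext_Ext p ⟨v, by omega⟩
      have hav := e.av.2 ⟨hp, ha⟩
      refine ⟨_, hav, e, ?_⟩
      simp only [hF]
      rw [dif_pos (by omega), if_pos hav]
    have hna : ∀ v : ℕ, v ≤ n → ¬ Act (Bf p) v → F v = 0 := by
      intro v hv ha
      have e := ext_Ext p ⟨v, by omega⟩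
      have hav : ¬ Av (Bf (ext p ⟨v, by omega⟩)) := fun h => ha (e.av.1 h).2
      simp only [hF]
      rw [dif_pos (by omega), if_neg hav]
    refine ⟨?_, ?_, ?_, ?_⟩
    · intro s h
      have hn := h.hn
      rw [hsum, f, sumD F (fun v => f d (.B v)) n s _ _ hn]
      · obtain ⟨p', hp', e, hv⟩ := hact 0 (by omega) ((h.act _ (by omega)).2 (by omega))
        rw [hv]; exact (ih _ p' hp').1 _ (h.zero e)
      · intro v h1 h2
        obtain ⟨p', hp', e, hv⟩ := hact v (by omega) ((h.act _ (by omega)).2 (by omega))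
        rw [hv]; exact (ih _ p' hp').2.1 _ (h.mid e h1 h2)
      · obtain ⟨p', hp', e, hv⟩ := hact n (by omega) ((h.act _ (by omega)).2 (by omega))
        rw [hv]; exact (ih _ p' hp').2.2.2 _ _ (h.top e)
      · intro v h1 h2
        exact hna v (by omega) (by rw [h.act _ (by omega)]; omega)
    · intro s h
      have hn := h.hn
      rw [hsum, f, sumD F (fun v => f d (.B v)) n s _ _ hn]
      · obtain ⟨p', hp', e, hv⟩ := hact 0 (by omega) ((h.act _ (by omega)).2 (by omega))
        rw [hv]; exact (ih _ p' hp').1 _ (h.zero e)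
      · intro v h1 h2
        obtain ⟨p', hp', e, hv⟩ := hact v (by omega) ((h.act _ (by omega)).2 (by omega))
        rw [hv]; exact (ih _ p' hp').2.1 _ (h.mid e h1 h2)
      · obtain ⟨p', hp', e, hv⟩ := hact n (by omega) ((h.act _ (by omega)).2 (by omega))
        rw [hv]; exact (ih _ p' hp').2.2.2 _ _ (h.top e)
      · intro v h1 h2
        exact hna v (by omega) (by rw [h.act _ (by omega)]; omega)
    · intro c h
      have hn := h.hn
      have hc := h.hc
      rw [hsum, f, sumG F (fun v => f d (.B v)) n 0 (n-c-1) (f d (.D 1)) (f d (.B 1))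
        (f d (.G 0 0)) 0 (by omega)]
      · simp
      · obtain ⟨p', hp', e, hv⟩ := hact 0 (by omega) ((h.act _ (by omega)).2 (by omega))
        rw [hv]; exact (ih _ p' hp').1 _ (h.zero e)
      · intro v h1 h2; omega
      · obtain ⟨p', hp', e, hv⟩ := hact n (by omega) ((h.act _ (by omega)).2 (by omega))
        rw [hv]; exact (ih _ p' hp').2.2.2 _ _ (h.top e)
      · intro v h1 h2
        exact hna v (by omega) (by rw [h.act _ (by omega)]; omega)
      · have : n - (n-c-1) - 1 = c := by omega
        rw [this]
        obtain ⟨p', hp', e, hv⟩ := hact c (by omega) ((h.act _ (by omega)).2 (by omega))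
        rw [hv]; exact (ih _ p' hp').2.2.1 _ (h.mid e)
      · intro v h1 h2
        exact hna v (by omega) (by rw [h.act _ (by omega)]; omega)
    · intro s t h
      have hn := h.hn
      rw [hsum, f, sumG F (fun v => f d (.B v)) n s t _ _ _ _ hn]
      · obtain ⟨p', hp', e, hv⟩ := hact 0 (by omega) ((h.act _ (by omega)).2 (by omega))
        rw [hv]; exact (ih _ p' hp').1 _ (h.zero e)
      · intro v h1 h2
        obtain ⟨p', hp', e, hv⟩ := hact v (by omega) ((h.act _ (by omega)).2 (by omega))
        rw [hv]; exact (ih _ p' hp').2.1 _ (h.mid e h1 h2)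
      · obtain ⟨p', hp', e, hv⟩ := hact n (by omega) ((h.act _ (by omega)).2 (by omega))
        rw [hv]; exact (ih _ p' hp').2.2.2 _ _ (h.top e)
      · intro v h1 h2
        exact hna v (by omega) (by rw [h.act _ (by omega)]; omega)
      · obtain ⟨p', hp', e, hv⟩ := hact (n-t-1) (by omega) ((h.act _ (by omega)).2 (by omega))
        rw [hv]; exact (ih _ p' hp').2.2.2 _ _ (h.grow e (by omega))
      · intro v h1 h2
        obtain ⟨p', hp', e, hv⟩ := hact v (by omega) ((h.act _ (by omega)).2 (by omega))
        rw [hv]; exact (ih _ p' hp').2.2.1 _ (h.hi e (by omega) (by omega))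

open Classical in
noncomputable def cnt (n : ℕ) : ℕ := (Finset.univ.filter fun p : Equiv.Perm (Fin n) => Av (Bf p)).card

open Classical in
lemma cnt_eq (d : ℕ) : ∀ n m, n + d = m →
    cnt m = ∑ p : Equiv.Perm (Fin n), if Av (Bf p) then desc d n p else 0 := by
  induction d with
  | zero =>
    rintro n m rfl
    simp only [cnt, desc, Finset.card_filter, Nat.add_zero]
  | succ d ih =>
    intro n m h
    rw [ih (n+1) m (by omega), ← (ext_bij n).sum_comp, Fintype.sum_prod_type]
    refine Finset.sum_congr rfl fun p _ => ?_
    split_ifs with hp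
    · rw [desc]
    · refine Finset.sum_eq_zero fun v _ => ?_
      rw [if_neg]
      exact fun h => hp ((ext_Ext p v).av.1 h).1

lemma cnt_succ (d : ℕ) : cnt (d+1) = f d (.D 0) := by
  have hb : ∀ (p : Equiv.Perm (Fin 1)) x y, ¬ Bf p x y := by
    rintro p x y ⟨hx, hy, h⟩
    have := Subsingleton.elim (p ⟨x, hx⟩) (p ⟨y, hy⟩)
    exact absurd h (by rw [this]; exact lt_irrefl _)
  have hav : ∀ p : Equiv.Perm (Fin 1), Av (Bf p) := by
    intro p x y z w _ _ _; simp [hb]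
  have hD : ∀ p : Equiv.Perm (Fin 1), LD 1 (Bf p) 0 := by
    intro p
    refine ⟨by omega, fun x y h => by omega, fun w hw => ?_⟩
    refine ⟨fun _ => by omega, fun _ => ⟨?_, ?_, ?_⟩⟩ <;>
    · intro x y z _ _ _ h
      exact absurd h (hb p _ _)
  rw [cnt_eq d 1 (d+1) (by omega)]
  simp only [hav, if_true]
  rw [Finset.sum_congr rfl (fun p _ => (desc_lab d 1 p (hav p)).1 0 (hD p))]
  simp

lemma cnt_zero : cnt 0 = 1 := by
  classical
  have hav : ∀ p : Equiv.Perm (Fin 0), Av (Bf p) := by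
    rintro p x y z w _ _ _
    refine ⟨?_, ?_, ?_⟩ <;>
    · rintro ⟨⟨h, _⟩, _⟩
      omega
  unfold cnt
  rw [Finset.filter_true_of_mem (fun p _ => hav p)]
  simp

section contain
variable {n : ℕ} (π : Equiv.Perm (Fin n))

lemma contains_of (σ : Fin 4 → Fin 4) (x y z w : Fin n) (hxy : x < y) (hyz : y < z) (hzw : z < w)
    (h : ∀ a b : Fin 4, σ a < σ b ↔ π (![x,y,z,w] a) < π (![x,y,z,w] b)) :
    ContainsPattern π σ := by
  have hm : StrictMono ![x,y,z,w] := by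
    rw [Fin.strictMono_iff_lt_succ]
    intro i; fin_cases i <;> simpa
  exact ⟨OrderEmbedding.ofStrictMono _ hm, h⟩

lemma av_iff : (∀ σ ∈ ({![0,3,1,2], ![1,2,3,0], ![2,0,3,1]} : Set (Fin 4 → Fin 4)),
    ¬ ContainsPattern π σ) ↔ Av (Bf π) := by
  simp only [Set.mem_insert_iff, Set.mem_singleton_iff, forall_eq_or_imp, forall_eq]
  constructor
  · rintro ⟨h1, h2, h3⟩ x y z w hxy hyz hzw
    refine ⟨?_, ?_, ?_⟩
    · rintro ⟨⟨hx, hz, k1⟩, ⟨_, hw, k2⟩, ⟨_, hy, k3⟩⟩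
      apply h1
      apply contains_of π _ ⟨x, hx⟩ ⟨y, hy⟩ ⟨z, hz⟩ ⟨w, hw⟩ hxy hyz hzw
      intro a b
      simp only [Fin.lt_def] at k1 k2 k3 ⊢
      fin_cases a <;> fin_cases b <;> simp <;> omega
    · rintro ⟨⟨hw, hx, k1⟩, ⟨_, hy, k2⟩, ⟨_, hz, k3⟩⟩
      apply h2
      apply contains_of π _ ⟨x, hx⟩ ⟨y, hy⟩ ⟨z, hz⟩ ⟨w, hw⟩ hxy hyz hzw
      intro a b
      simp only [Fin.lt_def] at k1 k2 k3 ⊢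
      fin_cases a <;> fin_cases b <;> simp <;> omega
    · rintro ⟨⟨hy, hw, k1⟩, ⟨_, hx, k2⟩, ⟨_, hz, k3⟩⟩
      apply h3
      apply contains_of π _ ⟨x, hx⟩ ⟨y, hy⟩ ⟨z, hz⟩ ⟨w, hw⟩ hxy hyz hzw
      intro a b
      simp only [Fin.lt_def] at k1 k2 k3 ⊢
      fin_cases a <;> fin_cases b <;> simp <;> omega
  · intro h
    refine ⟨?_, ?_, ?_⟩
    all_goals
      rintro ⟨g, hg⟩
      have m1 : g 0 < g 1 := g.strictMono (by decide)
      have m2 : g 1 < g 2 := g.strictMono (by decide)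
      have m3 : g 2 < g 3 := g.strictMono (by decide)
      have := h (g 0) (g 1) (g 2) (g 3) m1 m2 m3
    · exact this.1 ⟨⟨(g 0).2, (g 2).2, (hg 0 2).1 (by decide)⟩,
        ⟨(g 2).2, (g 3).2, (hg 2 3).1 (by decide)⟩, ⟨(g 3).2, (g 1).2, (hg 3 1).1 (by decide)⟩⟩
    · exact this.2.1 ⟨⟨(g 3).2, (g 0).2, (hg 3 0).1 (by decide)⟩,
        ⟨(g 0).2, (g 1).2, (hg 0 1).1 (by decide)⟩, ⟨(g 1).2, (g 2).2, (hg 1 2).1 (by decide)⟩⟩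
    · exact this.2.2 ⟨⟨(g 1).2, (g 3).2, (hg 1 3).1 (by decide)⟩,
        ⟨(g 3).2, (g 0).2, (hg 3 0).1 (by decide)⟩, ⟨(g 0).2, (g 2).2, (hg 0 2).1 (by decide)⟩⟩
end contain

lemma count_eq (n : ℕ) :
    avoiderCount ({![0,3,1,2], ![1,2,3,0], ![2,0,3,1]} : Set (Fin 4 → Fin 4)) n = cnt n := by
  classical
  unfold avoiderCount cnt
  simp only [av_iff]
  rw [Nat.card_eq_fintype_card, Fintype.card_subtype]

noncomputable def S (l : Lab) : PowerSeries ℚ := PowerSeries.mk fun d => (f d l : ℚ)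

lemma eB (s : ℕ) : (1 - X) * S (.B (s+1)) = S (.B s) := by
  rw [sub_mul, one_mul, sub_eq_iff_eq_add]
  ext d
  rcases d with _ | d
  · simp [S, f]
  · simp [S, f, PowerSeries.coeff_succ_X_mul, Finset.sum_range_succ]
    ring

lemma eG (s t : ℕ) : S (.G s t) = S (.B s) + X * S (.G s (t+1)) + (t : PowerSeries ℚ) * (X * S (.B 1)) := by
  have : (t : PowerSeries ℚ) = PowerSeries.C (t : ℚ) := by simp
  rw [this]
  ext d
  rcases d with _ | d
  · simp [S, f, PowerSeries.coeff_C_mul]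
  · simp [S, f, PowerSeries.coeff_succ_X_mul, PowerSeries.coeff_C_mul, -map_natCast]
    ring

lemma eD (s : ℕ) : S (.D s) = X * S (.D (s+1)) + S (.B s) - S (.B 0) + 1 + X * S (.G s 0) := by
  ext d
  rcases d with _ | d
  · simp [S, f]
  · simp [S, f, PowerSeries.coeff_succ_X_mul, PowerSeries.coeff_one]
    ring

lemma eD0 : S (.D 0) = S (.B 0) := by
  ext d
  rcases d with _ | d <;> simp [S, f]

lemma zero_of (E : ℕ → PowerSeries ℚ) (h : ∀ t, E t = X * E (t+1)) (t : ℕ) : E t = 0 := by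
  have : ∀ d t, PowerSeries.coeff d (E t) = 0 := by
    intro d
    induction d with
    | zero => intro t; rw [h t]; simp
    | succ d ih => intro t; rw [h t, PowerSeries.coeff_succ_X_mul, ih]
  ext d
  rw [this, map_zero]

lemma cG (s t : ℕ) : (1-X)^2 * S (.G s t) - (1-X) * S (.B s)
    - (t : PowerSeries ℚ) * X * (1-X) * S (.B 1) - X^2 * S (.B 1) = 0 := by
  refine zero_of (fun t => (1-X)^2 * S (.G s t) - (1-X) * S (.B s)
    - (t : PowerSeries ℚ) * X * (1-X) * S (.B 1) - X^2 * S (.B 1)) (fun t => ?_) t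
  push_cast
  linear_combination (1-X)^2 * eG s t

lemma cD (s : ℕ) : (1-2*X)*(1-X)^3 * S (.D s) - (1-X)^3 * S (.B s)
    - (1-2*X)*((1-X)^2*(1 - S (.B 0)) + X^3 * S (.B 1)) = 0 := by
  refine zero_of (fun s => (1-2*X)*(1-X)^3 * S (.D s) - (1-X)^3 * S (.B s)
    - (1-2*X)*((1-X)^2*(1 - S (.B 0)) + X^3 * S (.B 1))) (fun s => ?_) s
  have h := cG s 0
  push_cast at h
  linear_combination (1-2*X)*(1-X)^3 * eD s + (1-2*X)*(1-X)*X * h + (1-X)^2 * X * (eB s)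

end AV

theorem statement_10 :
    ((1 : PowerSeries ℚ) - 7*X + 17*X^2 - 20*X^3 + 12*X^4 - 2*X^5) * avoiderGF ({![0,3,1,2], ![1,2,3,0], ![2,0,3,1]} : Set (Fin 4 → Fin 4)) =
      1 - 6*X + 12*X^2 - 11*X^3 + 5*X^4 := by
  have hF : avoiderGF ({![0,3,1,2], ![1,2,3,0], ![2,0,3,1]} : Set (Fin 4 → Fin 4))
      = 1 + X * AV.S (.D 0) := by
    ext d
    simp only [avoiderGF, PowerSeries.coeff_mk, AV.count_eq]
    rcases d with _ | d
    · simp [AV.cnt_zero]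
    · simp [AV.cnt_succ, AV.S, PowerSeries.coeff_succ_X_mul, PowerSeries.coeff_one]
  have h1 := AV.cD 0
  have h2 := AV.eB 0
  rw [hF]
  rw [AV.eD0] at h1 ⊢
  linear_combination X * (1-X) * h1 + X * (1-2*X)*X^3 * h2
end

section
/- Let T = {1342, 2431, 3412} (patterns of length 4). Then the generating function for T-avoiders satisfies, as formal power series over ℚ, x·(1-3x+x^2)·(1-x+x^3)·F_T(x) = (1-x)^2·(1-4x+6x^2-5x^3+x^4)·C(x) - (1 - 6x + 14x^2 - 15x^3 + 8x^4 - x^5), where C(x) is the Catalan number generating function. -/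
open PowerSeries

namespace S11

def s2 (p q : ℕ) (l : List ℕ) : Prop := [p,q].Sublist l
def s3 (p q r : ℕ) (l : List ℕ) : Prop := [p,q,r].Sublist l
def s4 (p q r s : ℕ) (l : List ℕ) : Prop := [p,q,r,s].Sublist l

def AvT (l : List ℕ) : Prop := ∀ p q r s, s4 p q r s l →
  ¬(p<s∧s<q∧q<r) ∧ ¬(s<p∧p<r∧r<q) ∧ ¬(r<s∧s<p∧p<q)
def Av231 (l : List ℕ) : Prop := ∀ p q r, s3 p q r l → ¬(r<p∧p<q)
def AvK (l : List ℕ) : Prop := (∀ p q r, s3 p q r l → ¬(p<r∧r<q)) ∧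
  ∀ p q r s, s4 p q r s l → ¬(r<s∧s<p∧p<q)
def Dec (l : List ℕ) : Prop := ∀ p q, s2 p q l → q < p
def LL (X Y : List ℕ) : Prop := ∀ x ∈ X, ∀ y ∈ Y, x < y
def Ln (X : List ℕ) (n : ℕ) : Prop := ∀ x ∈ X, x < n

lemma s2c {p q n : ℕ} {Y} : s2 p q (n :: Y) ↔ s2 p q Y ∨ (p = n ∧ q ∈ Y) := by
  simp only [s2, List.cons_sublist_cons', List.singleton_sublist]
lemma s3c {p q r n : ℕ} {Y} : s3 p q r (n :: Y) ↔ s3 p q r Y ∨ (p = n ∧ s2 q r Y) := by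
  simp only [s2, s3, List.cons_sublist_cons']
lemma s4c {p q r s n : ℕ} {Y} : s4 p q r s (n :: Y) ↔ s4 p q r s Y ∨ (p = n ∧ s3 q r s Y) := by
  simp only [s3, s4, List.cons_sublist_cons']
lemma s2n {p q : ℕ} : ¬ s2 p q [] := by simp [s2]
lemma s3n {p q r : ℕ} : ¬ s3 p q r [] := by simp [s3]
lemma s4n {p q r s : ℕ} : ¬ s4 p q r s [] := by simp [s4]
lemma s2a {p q : ℕ} {X Y} : s2 p q (X++Y) ↔ s2 p q Y ∨ (p∈X ∧ q∈Y) ∨ s2 p q X := by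
  induction X with
  | nil => simp [s2n]
  | cons a X ih => 
    simp only [List.cons_append, s2c, ih, List.mem_cons, List.mem_append]; grind
lemma s3a {p q r : ℕ} {X Y} : s3 p q r (X++Y) ↔ s3 p q r Y ∨ (p∈X ∧ s2 q r Y) ∨ (s2 p q X ∧ r ∈ Y) ∨ s3 p q r X := by
  induction X with
  | nil => simp [s2n, s3n]
  | cons a X ih => 
    simp only [List.cons_append, s3c, s2a, s2c, ih, List.mem_cons]; grind
lemma s4a {p q r s : ℕ} {X Y} : s4 p q r s (X++Y) ↔ s4 p q r s Y ∨ (p∈X ∧ s3 q r s Y) ∨ (s2 p q X ∧ s2 r s Y) ∨ (s3 p q r X ∧ s ∈ Y) ∨ s4 p q r s X := by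
  induction X with
  | nil => simp [s2n, s3n, s4n]
  | cons a X ih => 
    simp only [List.cons_append, s4c, s3a, s3c, s2c, ih, List.mem_cons]; grind

lemma mem2 {p q : ℕ} {X} (h : s2 p q X) : p ∈ X ∧ q ∈ X := 
  ⟨h.subset (by simp), h.subset (by simp)⟩
lemma mem3 {p q r : ℕ} {X} (h : s3 p q r X) : p ∈ X ∧ q ∈ X ∧ r ∈ X := 
  ⟨h.subset (by simp), h.subset (by simp), h.subset (by simp)⟩
lemma mem4 {p q r s : ℕ} {X} (h : s4 p q r s X) : p ∈ X ∧ q ∈ X ∧ r ∈ X ∧ s ∈ X := 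
  ⟨h.subset (by simp), h.subset (by simp), h.subset (by simp), h.subset (by simp)⟩
lemma s32 {p q r : ℕ} {X} (h : s3 p q r X) : s2 p q X ∧ s2 q r X := 
  ⟨List.Sublist.trans (by simp) h, List.Sublist.trans (by simp) h⟩
lemma s43 {p q r s : ℕ} {X} (h : s4 p q r s X) : s3 p q r X ∧ s3 q r s X ∧ s3 p q s X ∧ s3 p r s X := 
  ⟨List.Sublist.trans (by simp) h, List.Sublist.trans (by simp) h, List.Sublist.trans (by simp) h, List.Sublist.trans (by simp) h⟩
lemma uT {l p q r s} (h : AvT l) (h' : s4 p q r s l) : 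
  ¬(p<s∧s<q∧q<r) ∧ ¬(s<p∧p<r∧r<q) ∧ ¬(r<s∧s<p∧p<q) := h _ _ _ _ h'
lemma u231 {l p q r} (h : Av231 l) (h' : s3 p q r l) : ¬(r<p∧p<q) := h _ _ _ h'
lemma uK3 {l p q r} (h : AvK l) (h' : s3 p q r l) : ¬(p<r∧r<q) := h.1 _ _ _ h'
lemma uK4 {l p q r s} (h : AvK l) (h' : s4 p q r s l) : ¬(r<s∧s<p∧p<q) := h.2 _ _ _ _ h'
lemma uD {l p q} (h : Dec l) (h' : s2 p q l) : q < p := h _ _ h'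
lemma uLL {X Y p q} (h : LL X Y) (h' : p ∈ X) (h'' : q ∈ Y) : p < q := h _ h' _ h''
lemma uLn {X n p} (h : Ln X n) (h' : p ∈ X) : p < n := h _ h'

-- well-definedness
lemma T1 {n R} (hR : Ln R n) (h : AvT R) : AvT (n :: R) := by
  intro p q r s hs
  simp only [s4c] at hs
  grind [→ mem3, → mem4, → uT, → uLn]
lemma T2 {A n R} (hA : Ln A n) (hR : Ln R n) (hAR : LL A R) (h : AvT A) (h' : Av231 R) : AvT (A ++ n :: R) := by
  intro p q r s hs
  simp only [s4a, s4c, s3c, s2c, List.mem_cons] at hs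
  grind [→ mem2, → mem3, → mem4, → s43, → uT, → u231, → uLn, → uLL]
lemma T3 {B n D R} (hB : Ln B n) (hD : Ln D n) (hR : Ln R n) (hBR : LL B R)
  (hDR : LL D R) (hDB : LL D B) (h : AvK B) (h' : Av231 R) (hd : Dec D) : AvT (B ++ n :: (D ++ R)) := by
  intro p q r s hs
  simp only [s4a, s4c, s3a, s3c, s2a, s2c, List.mem_cons, List.mem_append] at hs
  grind [→ mem2, → mem3, → mem4, → s43, → s32, → uD, → uK3, → uK4, → u231, → uLn, → uLL]
lemma T4 {B A n D R} (hB : Ln B n) (hA : Ln A n) (hD : Ln D n) (hR : Ln R n) (hBR : LL B R)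
  (hAR : LL A R) (hAB : LL A B) (hAD : LL A D) (hDR : LL D R) (hDB : LL D B)
   (h : AvT A) (h' : Av231 R) (hb : Dec B) (hd : Dec D) : AvT (B ++ (A ++ n :: (D ++ R))) := by
  intro p q r s hs
  simp only [s4a, s4c, s3a, s3c, s2a, s2c, List.mem_cons, List.mem_append] at hs
  grind [→ mem2, → mem3, → mem4, → s43, → s32, → uD, → uT, → u231, → uLn, → uLL]
lemma K1 {n R} (hR : Ln R n) (h : AvK R) : AvK (n :: R) := by
  constructor
  all_goals
    intros
    simp only [s4c, s3c, s2c] at *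
    grind [→ mem2, → mem3, → mem4, → uK3, → uK4, → uLn, → uLL]
lemma K2 {B n D} (hB : Ln B n) (hD : Ln D n) (hDB : LL D B)
    (h : AvK B) (hd : Dec D) : AvK (B ++ n :: D) := by
  constructor
  all_goals
    intros
    simp only [s4a, s4c, s3a, s3c, s2a, s2c, List.mem_cons, List.mem_append] at *
    grind [→ mem2, → mem3, → mem4, → s43, → s32, → uD, → uK3, → uK4, → uLn, → uLL]
lemma C1 {A n R} (hA : Ln A n) (hR : Ln R n) (hAR : LL A R) (h : Av231 A) (h' : Av231 R) : Av231 (A ++ n :: R) := by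
  intro p q r hs
  simp only [s3a, s3c, s2c, List.mem_cons] at hs
  grind [→ mem2, → mem3, → s32, → u231, → uLn, → uLL]

lemma s2_of_ne {X : List ℕ} {p q : ℕ} (hp : p ∈ X) (hq : q ∈ X) (h : p ≠ q) : s2 p q X ∨ s2 q p X := by
  induction X with
  | nil => simp at hp
  | cons a X ih =>
    simp only [s2c, List.mem_cons] at *
    grind

lemma s2_ne {X : List ℕ} {p q : ℕ} (hX : X.Nodup) (h : s2 p q X) : p ≠ q := by
  have := List.Nodup.sublist h hX
  simpa using this

lemma splitp {X : List ℕ} (P : ℕ → Prop) (h : ∀ u v, s2 u v X → ¬ (¬ P u ∧ P v)) :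
    ∃ D E, X = D ++ E ∧ (∀ x ∈ D, P x) ∧ ∀ x ∈ E, ¬ P x := by
  induction X with
  | nil => exact ⟨[], [], by simp⟩
  | cons a X ih =>
    by_cases ha : P a
    · obtain ⟨D, E, rfl, h1, h2⟩ := ih (fun u v huv => h u v (s2c.2 (Or.inl huv)))
      exact ⟨a :: D, E, rfl, by simpa [ha] using h1, h2⟩
    · refine ⟨[], a :: X, rfl, by simp, ?_⟩
      intro x hx
      rcases List.mem_cons.1 hx with rfl | hx
      · exact ha
      · intro hp
        exact h a x (s2c.2 (Or.inr ⟨rfl, hx⟩)) ⟨ha, hp⟩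

lemma exmax {L : List ℕ} (h : L ≠ []) : ∃ M ∈ L, ∀ x ∈ L, x ≤ M := by
  induction L with
  | nil => simp at h
  | cons a L ih =>
    by_cases hL : L = []
    · subst hL; exact ⟨a, by simp⟩
    · obtain ⟨M, hM, h1⟩ := ih hL
      by_cases h2 : a ≤ M
      · exact ⟨M, by simp [hM], by simpa [h2] using h1⟩
      · refine ⟨a, by simp, ?_⟩
        intro x hx
        rcases List.mem_cons.1 hx with rfl | hx
        · exact le_rfl
        · have := h1 x hx; omega

lemma avT_sub {X Y : List ℕ} (h : X.Sublist Y) (hY : AvT Y) : AvT X :=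
  fun p q r s hs => hY p q r s (List.Sublist.trans hs h)
lemma avK_sub {X Y : List ℕ} (h : X.Sublist Y) (hY : AvK Y) : AvK X :=
  ⟨fun p q r hs => hY.1 p q r (List.Sublist.trans hs h), fun p q r s hs => hY.2 p q r s (List.Sublist.trans hs h)⟩
lemma av231_sub {X Y : List ℕ} (h : X.Sublist Y) (hY : Av231 Y) : Av231 X :=
  fun p q r hs => hY p q r (List.Sublist.trans hs h)

structure Good (B A : List ℕ) (n : ℕ) (D E : List ℕ) : Prop where
  AD : LL A D
  DB : LL D B
  AE : LL A E
  BE : LL B E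
  DE : LL D E
  AB : LL A B
  dec : Dec D
  iff : D = [] ↔ B = []

set_option maxHeartbeats 1000000 in
lemma splitT {L R : List ℕ} {n : ℕ} (h : AvT (L ++ n :: R)) (hL : Ln L n) (hR : Ln R n)
    (hn : (L ++ n :: R).Nodup) (hne : L ≠ []) :
    ∃ B A D E, L = B ++ A ∧ R = D ++ E ∧ Good B A n D E ∧ Av231 E ∧ AvT A ∧
      (D ≠ [] → (A = [] → AvK B) ∧ (A ≠ [] → Dec B)) := by
  have H1 : ∀ p q s, s2 p q L → s ∈ R → ¬ (p < s ∧ s < q) := by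
    intro p q s h1 h2
    have := uT (p := p) (q := q) (r := n) (s := s) h (by simp only [s4a, s2c]; tauto)
    have := uLn hL (mem2 h1).2
    omega
  have H2 : ∀ p r s, p ∈ L → s2 r s R → ¬ (s < p ∧ p < r) ∧ ¬ (r < s ∧ s < p) := by
    intro p r s h1 h2
    have := uT (p := p) (q := n) (r := r) (s := s) h (by simp only [s4a, s3c]; tauto)
    have := uLn hL h1
    have := uLn hR (mem2 h2).1
    omega
  have hdis : ∀ x ∈ L, x ∉ R := by
    intro x hx hx'
    have := List.disjoint_of_nodup_append hn hx
    simp [hx'] at this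
  have hnR : R.Nodup := (List.nodup_cons.1 (List.nodup_append.1 hn).2.1).2
  obtain ⟨M, hM, hMax⟩ := exmax hne
  obtain ⟨D, E, rfl, hD, hE⟩ := splitp (X := R) (fun x => x < M) (by
    intro u v huv ⟨h1, h2⟩
    have := (H2 M u v hM huv).1
    have : u ≠ M := fun e => hdis M hM (e ▸ (mem2 huv).1)
    omega)
  have LE : LL L E := by
    intro x hx y hy
    have := hE y hy
    have := hMax x hx
    have : x ≠ y := fun e => hdis x hx (by simp [e, hy])
    omega
  have DE : LL D E := by
    intro x hx y hy
    have := hE y hy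
    have := hD x hx
    omega
  have hE231 : Av231 E := by
    intro p q r hs hh
    have h1 := uT (p := M) (q := p) (r := q) (s := r) h (by simp only [s4a, s3c, s3a]; tauto)
    have := uLL LE hM (mem3 hs).2.2
    omega
  have dD : Dec D := by
    intro r s hs
    have h0 : s2 r s (D ++ E) := by simp only [s2a]; tauto
    have h1 := H2 M r s hM h0
    have h2 := s2_ne hnR h0
    have := hD s (mem2 hs).2
    omega
  have AL : AvT L := avT_sub (by simp) h
  by_cases hD0 : D = []
  · subst hD0
    refine ⟨[], L, [], E, rfl, rfl, ⟨?_, ?_, LE, ?_, DE, ?_, dD, by simp⟩, hE231, AL, by simp⟩ <;> simp [LL]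
  obtain ⟨d, hd⟩ := List.exists_mem_of_ne_nil D hD0
  have hdR : d ∈ D ++ E := by simp [hd]
  obtain ⟨B, A, rfl, hB, hA⟩ := splitp (X := L) (fun x => d < x) (by
    intro u v huv ⟨h1, h2⟩
    have := H1 u v d huv hdR
    have : u ≠ d := fun e => hdis u (mem2 huv).1 (e ▸ hdR)
    omega)
  have gap : ∀ x ∈ B ++ A, ∀ r ∈ D, ∀ s ∈ D, ¬ (s < x ∧ x < r) := by
    intro x hx r hr s hs hh
    rcases s2_of_ne hr hs (by omega) with h1 | h1
    · exact (H2 x r s hx (by simp only [s2a]; tauto)).1 hh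
    · have := dD _ _ h1; omega
  have hA' : ∀ x ∈ A, x < d := by
    intro x hx
    have := hA x hx
    have : x ≠ d := fun e => hdis x (by simp [hx]) (e ▸ hdR)
    omega
  have AD : LL A D := by
    intro x hx y hy
    have := gap x (by simp [hx]) d hd y hy
    have := hA' x hx
    have : x ≠ y := fun e => hdis x (by simp [hx]) (by simp [e, hy])
    omega
  have DB : LL D B := by
    intro y hy x hx
    have := gap x (by simp [hx]) y hy d hd
    have := hB x hx
    have : x ≠ y := fun e => hdis x (by simp [hx]) (by simp [e, hy])
    omega
  have AB : LL A B := fun x hx y hy => (hA' x hx).trans (hB y hy)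
  have hMB : M ∈ B := by
    rcases List.mem_append.1 hM with h1 | h1
    · exact h1
    · have := hA' M h1; have := hD d hd; omega
  have hB0 : B ≠ [] := List.ne_nil_of_mem hMB
  refine ⟨B, A, D, E, rfl, rfl, ⟨AD, DB, fun x hx => LE x (by simp [hx]), fun x hx => LE x (by simp [hx]), DE, AB, dD, by simp [hD0, hB0]⟩, hE231, 
    avT_sub (by simp) AL, fun _ => ⟨?_, ?_⟩⟩
  · intro hA0
    refine ⟨?_, ?_⟩
    · intro p q r hs hh
      have h1 := uT (p := p) (q := q) (r := r) (s := d) h (by simp [s4a, s3a, hs, hd])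
      have := uLL DB hd (mem3 hs).1
      omega
    · intro p q r s hs hh
      have h1 := uT (p := p) (q := q) (r := r) (s := s) h (by simp [s4a, hs])
      omega
  · intro hA0 p q hs
    obtain ⟨a, ha⟩ := List.exists_mem_of_ne_nil A hA0
    have h1 := uT (p := p) (q := q) (r := a) (s := d) h (by simp [s4a, s2a, s2c, hs, ha, hd])
    have := uLL AD ha hd
    have := uLL DB hd (mem2 hs).1
    have : p ≠ q := s2_ne (List.nodup_append.1 hn).1 (by simp only [s2a]; tauto)
    omega

lemma splitK {L R : List ℕ} {n : ℕ} (h : AvK (L ++ n :: R)) (hL : Ln L n) (hR : Ln R n)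
    (hn : (L ++ n :: R).Nodup) (hne : L ≠ []) : LL R L ∧ Dec R ∧ AvK L := by
  have hdis : ∀ x ∈ L, x ∉ R := by
    intro x hx hx'
    have := List.disjoint_of_nodup_append hn hx
    simp [hx'] at this
  have hnR : R.Nodup := (List.nodup_cons.1 (List.nodup_append.1 hn).2.1).2
  have RL : LL R L := by
    intro y hy x hx
    have := uK3 (p := x) (q := n) (r := y) h (by simp only [s3a, s2c]; tauto)
    have : x ≠ y := fun e => hdis x hx (e ▸ hy)
    have := uLn hR hy
    omega
  refine ⟨RL, ?_, avK_sub (by simp) h⟩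
  intro r s hs
  obtain ⟨x, hx⟩ := List.exists_mem_of_ne_nil L hne
  have h1 := uK4 (p := x) (q := n) (r := r) (s := s) h (by simp only [s4a, s3c]; tauto)
  have := uLn hL hx
  have := uLL RL (mem2 hs).2 hx
  have := s2_ne hnR hs
  omega

lemma splitC {L R : List ℕ} {n : ℕ} (h : Av231 (L ++ n :: R)) (hL : Ln L n) 
    (hn : (L ++ n :: R).Nodup) : LL L R ∧ Av231 L ∧ Av231 R := by
  have hdis : ∀ x ∈ L, x ∉ R := by
    intro x hx hx'
    have := List.disjoint_of_nodup_append hn hx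
    simp [hx'] at this
  refine ⟨?_, av231_sub (by simp) h, av231_sub (List.Sublist.trans (List.sublist_cons_self n R) (List.sublist_append_right _ _)) h⟩
  intro x hx y hy 
  have := u231 (p := x) (q := n) (r := y) h (by simp only [s3a, s2c]; tauto)
  have : x ≠ y := fun e => hdis x hx (e ▸ hy)
  have := uLn hL hx
  omega

def sh (k : ℕ) (l : List ℕ) : List ℕ := l.map (· + k)
def Pm (l : List ℕ) : Prop := l.Perm (List.range' 0 l.length)

lemma sh_len (k l) : (sh k l).length = l.length := by simp [sh]
lemma sh_perm {k m l} (h : l.Perm (List.range' 0 m)) : (sh k l).Perm (List.range' k m) := by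
  have := h.map (· + k)
  rwa [show (List.range' 0 m).map (· + k) = List.range' k m by
    simp [add_comm _ k, List.map_add_range']] at this
lemma sh_inj {k l l'} (h : sh k l = sh k l') : l = l' :=
  List.map_injective_iff.2 (add_left_injective k) h

lemma sh_s2 {k p q l} : s2 p q l → s2 (p+k) (q+k) (sh k l) := fun h => List.Sublist.map (· + k) h
lemma sh_s3 {k p q r l} : s3 p q r l → s3 (p+k) (q+k) (r+k) (sh k l) := fun h => List.Sublist.map (· + k) h
lemma sh_s4 {k p q r s l} : s4 p q r s l → s4 (p+k) (q+k) (r+k) (s+k) (sh k l) := fun h => List.Sublist.map (· + k) h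

lemma sh_s2' {k p q l} (h : s2 p q (sh k l)) : ∃ p' q', p = p' + k ∧ q = q' + k ∧ s2 p' q' l := by
  obtain ⟨l', h1, h2⟩ := List.sublist_map_iff.1 h
  match l', h2, h1 with
  | [a, b], h2, h1 => simp at h2; exact ⟨a, b, h2.1, h2.2, h1⟩
lemma sh_s3' {k p q r l} (h : s3 p q r (sh k l)) : ∃ p' q' r', p = p' + k ∧ q = q' + k ∧ r = r' + k ∧ s3 p' q' r' l := by
  obtain ⟨l', h1, h2⟩ := List.sublist_map_iff.1 h
  match l', h2, h1 with
  | [a, b, c], h2, h1 => simp at h2; exact ⟨a, b, c, h2.1, h2.2.1, h2.2.2, h1⟩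
lemma sh_s4' {k p q r s l} (h : s4 p q r s (sh k l)) : ∃ p' q' r' s', p = p' + k ∧ q = q' + k ∧ r = r' + k ∧ s = s' + k ∧ s4 p' q' r' s' l := by
  obtain ⟨l', h1, h2⟩ := List.sublist_map_iff.1 h
  match l', h2, h1 with
  | [a, b, c, d], h2, h1 => simp at h2; exact ⟨a, b, c, d, h2.1, h2.2.1, h2.2.2.1, h2.2.2.2, h1⟩

lemma sh_AvT {k l} : AvT (sh k l) ↔ AvT l := by
  constructor
  · intro h p q r s hs
    have := uT h (sh_s4 (k := k) hs)
    omega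
  · intro h p q r s hs
    obtain ⟨p', q', r', s', rfl, rfl, rfl, rfl, hs'⟩ := sh_s4' hs
    have := uT h hs'
    omega
lemma sh_AvK {k l} : AvK (sh k l) ↔ AvK l := by
  constructor
  · intro h
    refine ⟨fun p q r hs => ?_, fun p q r s hs => ?_⟩
    · have := uK3 h (sh_s3 (k := k) hs)
      omega
    · have := uK4 h (sh_s4 (k := k) hs)
      omega
  · intro h
    refine ⟨fun p q r hs => ?_, fun p q r s hs => ?_⟩
    · obtain ⟨p', q', r', rfl, rfl, rfl, hs'⟩ := sh_s3' hs
      have := uK3 h hs'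
      omega
    · obtain ⟨p', q', r', s', rfl, rfl, rfl, rfl, hs'⟩ := sh_s4' hs
      have := uK4 h hs'
      omega
lemma sh_Av231 {k l} : Av231 (sh k l) ↔ Av231 l := by
  constructor
  · intro h p q r hs
    have := u231 h (sh_s3 (k := k) hs)
    omega
  · intro h p q r hs
    obtain ⟨p', q', r', rfl, rfl, rfl, hs'⟩ := sh_s3' hs
    have := u231 h hs'
    omega
lemma sh_Dec {k l} : Dec (sh k l) ↔ Dec l := by
  constructor
  · intro h p q hs
    have := uD h (sh_s2 (k := k) hs)
    omega
  · intro h p q hs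
    obtain ⟨p', q', rfl, rfl, hs'⟩ := sh_s2' hs
    have := uD h hs'
    omega

lemma unsh {k X} (h : X.Perm (List.range' k X.length)) : ∃ Y, Pm Y ∧ X = sh k Y := by
  refine ⟨X.map (· - k), ?_, ?_⟩
  · have := h.map (· - k)
    unfold Pm
    rw [List.length_map]
    convert this using 1
    rw [List.map_sub_range' le_rfl]; simp
  · unfold sh
    rw [List.map_map]
    conv_lhs => rw [← List.map_id X]
    apply List.map_congr_left
    intro x hx
    have := h.subset hx
    simp at this
    simp; omega

lemma split_perm {X Y : List ℕ} {s m} (h : (X ++ Y).Perm (List.range' s m)) (hXY : LL X Y) :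
    X.Perm (List.range' s X.length) ∧ Y.Perm (List.range' (s + X.length) Y.length) := by
  have hm : m = X.length + Y.length := by simpa using h.length_eq.symm
  subst hm
  have hX := List.perm_insertionSort (· ≤ ·) X
  have hY := List.perm_insertionSort (· ≤ ·) Y
  have hs := (hX.append hY).trans h
  have e : X.insertionSort (· ≤ ·) ++ Y.insertionSort (· ≤ ·) = List.range' s (X.length + Y.length) := by
    apply List.Perm.eq_of_pairwise' (r := (· ≤ ·)) _ _ hs
    · rw [List.pairwise_append]
      refine ⟨List.pairwise_insertionSort _ _, List.pairwise_insertionSort _ _, ?_⟩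
      intro x hx y hy
      exact (hXY x (hX.subset hx) y (hY.subset hy)).le
    · exact (List.pairwise_lt_range').imp le_of_lt
  rw [← List.range'_append_1] at e
  obtain ⟨e1, e2⟩ := List.append_inj e (by simp [hX.length_eq])
  exact ⟨e1 ▸ hX.symm, e2 ▸ hY.symm⟩

lemma dec_eq {D a d} (h : D.Perm (List.range' a d)) (hD : Dec D) : D = (List.range' a d).reverse := by
  apply List.Perm.eq_of_pairwise' (r := (· > ·)) _ _ (h.trans (List.reverse_perm _).symm)
  · rw [List.pairwise_iff_forall_sublist]
    intro a b hab
    exact hD _ _ hab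
  · rw [List.pairwise_reverse]
    exact List.pairwise_lt_range'
lemma rev_dec (a d) : Dec (List.range' a d).reverse := by
  have : List.Pairwise (· > ·) (List.range' a d).reverse := by
    rw [List.pairwise_reverse]
    exact List.pairwise_lt_range'
  intro p q h
  exact List.pairwise_iff_forall_sublist.1 this h

abbrev Tup := List ℕ × List ℕ × ℕ × List ℕ

def Phi (t : Tup) : List ℕ :=
  sh (t.2.1.length + t.2.2.1) t.1 ++ (t.2.1 ++ (t.2.1.length + t.2.2.1 + t.1.length + t.2.2.2.length) ::
    ((List.range' t.2.1.length t.2.2.1).reverse ++ sh (t.2.1.length + t.2.2.1 + t.1.length) t.2.2.2))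

def wt (t : Tup) : ℕ := t.1.length + (t.2.1.length + (t.2.2.1 + t.2.2.2.length))

lemma Phi_len (t) : (Phi t).length = wt t + 1 := by
  simp [Phi, wt, sh_len]; omega

lemma perm5 (A B D E : List ℕ) (n : ℕ) : (B ++ (A ++ n :: (D ++ E))).Perm (A ++ (D ++ (B ++ (E ++ [n])))) := by
  rw [List.perm_iff_count]; intro a; simp [List.count_append, List.count_cons]; omega

lemma Phi_Pm {B A d E} (hB : Pm B) (hA : Pm A) (hE : Pm E) : Pm (Phi (B, A, d, E)) := by
  unfold Pm
  rw [Phi_len]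
  refine (perm5 _ _ _ _ _).trans ?_
  have := hA.append ((List.reverse_perm (List.range' A.length d)).append ((sh_perm (k := A.length + d) hB).append 
    ((sh_perm (k := A.length + d + B.length) hE).append (List.Perm.refl [A.length + d + B.length + E.length]))))
  refine this.trans (List.Perm.of_eq ?_)
  have e0 : [A.length + d + B.length + E.length] = List.range' (A.length + d + B.length + E.length) 1 := by simp
  rw [e0, List.range'_append_1, List.range'_append_1, List.range'_append_1]
  have := List.range'_append_1 (s := 0) (m := A.length) (n := d + (B.length + (E.length + 1)))
  rw [Nat.zero_add] at this
  rw [this]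
  congr 1
  simp [wt]; omega

lemma Pm_mem {X} (h : Pm X) {x} : x ∈ X ↔ x < X.length := by
  rw [h.mem_iff]; simp
lemma sh_mem {X k} (h : Pm X) {x} : x ∈ sh k X ↔ k ≤ x ∧ x < k + X.length := by
  rw [(sh_perm h).mem_iff]; simp
lemma Pm_nodup {X} (h : Pm X) : X.Nodup := h.nodup_iff.2 List.nodup_range'

lemma Phi_good {B A d E} (hB : Pm B) (hA : Pm A) (hE : Pm E) (hd : d = 0 ↔ B = []) :
    Good (sh (A.length + d) B) A (A.length + d + B.length + E.length) (List.range' A.length d).reverse (sh (A.length + d + B.length) E) := by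
  constructor
  all_goals first | exact rev_dec _ _ | (simp [sh, hd]; done) | (intro x hx y hy; simp only [Pm_mem hA, sh_mem hB, sh_mem hE, List.mem_reverse, List.mem_range'_1] at hx hy; omega)

lemma Phi_Ln {B A d E} (hB : Pm B) (hA : Pm A) (hE : Pm E) :
    Ln (sh (A.length + d) B) (A.length + d + B.length + E.length) ∧ Ln A (A.length + d + B.length + E.length) ∧ 
    Ln (List.range' A.length d).reverse (A.length + d + B.length + E.length) ∧ Ln (sh (A.length + d + B.length) E) (A.length + d + B.length + E.length) := by
  refine ⟨?_, ?_, ?_, ?_⟩ <;> 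
  (intro x hx; simp only [Pm_mem hA, sh_mem hB, sh_mem hE, List.mem_reverse, List.mem_range'_1] at hx; omega)

lemma blocks {B A D E : List ℕ} {n} (h : Pm (B ++ (A ++ n :: (D ++ E)))) (g : Good B A n D E)
    (hB : Ln B n) (hA : Ln A n) (hD : Ln D n) (hE : Ln E n) :
    ∃ B' E', Pm B' ∧ Pm A ∧ Pm E' ∧ B = sh (A.length + D.length) B' ∧ E = sh (A.length + D.length + B'.length) E' ∧
      (D.length = 0 ↔ B' = []) ∧ B ++ (A ++ n :: (D ++ E)) = Phi (B', A, D.length, E') := by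
  have h1 := (perm5 A B D E n).symm.trans h
  obtain ⟨pA, h2⟩ := split_perm h1 (by
    intro x hx y hy
    simp only [List.mem_append, List.mem_singleton] at hy
    rcases hy with hy | hy | hy | rfl
    exacts [g.AD x hx y hy, g.AB x hx y hy, g.AE x hx y hy, hA x hx])
  obtain ⟨pD, h3⟩ := split_perm h2 (by
    intro x hx y hy
    simp only [List.mem_append, List.mem_singleton] at hy
    rcases hy with hy | hy | rfl
    exacts [g.DB x hx y hy, g.DE x hx y hy, hD x hx])
  obtain ⟨pB, h4⟩ := split_perm h3 (by
    intro x hx y hy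
    simp only [List.mem_append, List.mem_singleton] at hy
    rcases hy with hy | rfl
    exacts [g.BE x hx y hy, hB x hx])
  obtain ⟨pE, h5⟩ := split_perm h4 (by
    intro x hx y hy
    simp only [List.mem_singleton] at hy
    subst hy
    exact hE x hx)
  have eD := dec_eq pD g.dec
  obtain ⟨B', hB', eB⟩ := unsh pB
  obtain ⟨E', hE', eE⟩ := unsh pE
  have lB : B.length = B'.length := by rw [eB, sh_len]
  have lE : E.length = E'.length := by rw [eE, sh_len]
  have en : n = A.length + D.length + B'.length + E'.length := by
    simp at h5
    omega
  simp only [Nat.zero_add] at eD eB eE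
  rw [lB] at eE
  refine ⟨B', E', hB', pA, hE', eB, eE, ?_, ?_⟩
  · rw [List.length_eq_zero_iff, g.iff, eB]; simp [sh]
  · unfold Phi
    simp only
    rw [← eB, ← eE, ← eD, ← en]

lemma Phi_inj : Set.InjOn Phi {t | Pm t.1 ∧ Pm t.2.1 ∧ Pm t.2.2.2 ∧ (t.2.2.1 = 0 ↔ t.1 = [])} := by
  rintro ⟨B, A, d, E⟩ ⟨hB, hA, hE, hd⟩ ⟨B', A', d', E'⟩ ⟨hB', hA', hE', hd'⟩ e
  simp only at *
  have hl := congrArg List.length e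
  rw [Phi_len, Phi_len] at hl
  have g := Phi_good hB hA hE hd
  have g' := Phi_good hB' hA' hE' hd'
  have l := Phi_Ln (d := d) hB hA hE 
  have l' := Phi_Ln (d := d') hB' hA' hE'
  have nd := Pm_nodup (Phi_Pm (d := d) hB hA hE)
  simp only [Phi] at e nd
  simp only [wt] at hl
  rw [show A'.length + d' + B'.length + E'.length = A.length + d + B.length + E.length by omega] at e l'
  generalize A.length + d + B.length + E.length = n at *
  have hi : (sh (A.length + d) B ++ A) = (sh (A'.length + d') B' ++ A') ∧ 
     ((List.range' A.length d).reverse ++ sh (A.length + d + B.length) E) = ((List.range' A'.length d').reverse ++ sh (A'.length + d' + B'.length) E') := by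
    rw [← List.append_assoc, ← List.append_assoc] at e
    have n1 : n ∉ (sh (A.length + d) B ++ A) := by
      intro hx
      rcases List.mem_append.1 hx with hx | hx
      · exact (l.1 n hx).ne rfl
      · exact (l.2.1 n hx).ne rfl
    have n2 : n ∉ ((List.range' A.length d).reverse ++ sh (A.length + d + B.length) E) := by
      intro hx
      rcases List.mem_append.1 hx with hx | hx
      · exact (l.2.2.1 n hx).ne rfl
      · exact (l.2.2.2 n hx).ne rfl
    have := List.append_cons_inj_of_notMem n1 n2 |>.1 e
    exact ⟨this.1, this.2.2⟩
  obtain ⟨e1, e2⟩ := hi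
  have key : ∀ {B A D E : List ℕ} {n}, Good B A n D E → 
      (D ++ E).countP (fun x => decide (∃ y ∈ B ++ A, x < y)) = D.length ∧ (B ++ A).countP (fun y => decide (∃ x ∈ D ++ E, x < y)) = B.length := by
    intro B A D E n g
    constructor
    · rw [List.countP_append, List.countP_eq_length.2, List.countP_eq_zero.2]
      · simp
      · intro x hx
        simp only [decide_eq_true_eq, not_exists, not_and, List.mem_append]
        rintro y (hy | hy)
        · have := g.BE y hy x hx; omega
        · have := g.AE y hy x hx; omega
      · intro x hx
        obtain ⟨y, hy⟩ := List.exists_mem_of_ne_nil B (fun h0 => by rw [g.iff.2 h0] at hx; simp at hx)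
        simp only [decide_eq_true_eq]
        exact ⟨y, by simp [hy], g.DB x hx y hy⟩
    · rw [List.countP_append, List.countP_eq_length.2, List.countP_eq_zero.2]
      · simp
      · intro x hx
        simp only [decide_eq_true_eq, not_exists, not_and, List.mem_append]
        rintro y (hy | hy)
        · have := g.AD x hx y hy; omega
        · have := g.AE x hx y hy; omega
      · intro x hx
        obtain ⟨y, hy⟩ := List.exists_mem_of_ne_nil D (fun h0 => by rw [g.iff.1 h0] at hx; simp at hx)
        simp only [decide_eq_true_eq]
        exact ⟨y, by simp [hy], g.DB y hy x hx⟩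
  have k1 := key g
  have k2 := key g'
  rw [e1, e2] at k1
  have ed : d = d' := by
    have := k1.1.symm.trans k2.1
    simpa using this
  have eb : B.length = B'.length := by
    have := k1.2.symm.trans k2.2
    simpa [sh_len] using this
  obtain ⟨f1, f2⟩ := List.append_inj e1 (by simpa [sh_len] using eb)
  subst f2 ed
  obtain ⟨-, f3⟩ := List.append_inj e2 (by simp)
  rw [← eb] at f3
  rw [sh_inj f1, sh_inj f3]

def SF {α : Type*} (w : α → ℕ) (S : Set α) : Prop := ∀ n, {x | x ∈ S ∧ w x = n}.Finite
noncomputable def gf {α : Type*} (w : α → ℕ) (S : Set α) : PowerSeries ℚ :=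
  PowerSeries.mk fun n => ({x | x ∈ S ∧ w x = n}.ncard : ℚ)

lemma SF_mono {α : Type*} {w : α → ℕ} {S T : Set α} (h : S ⊆ T) (hT : SF w T) : SF w S :=
  fun n => (hT n).subset fun _ hx => ⟨h hx.1, hx.2⟩

lemma gf_union {α : Type*} {w : α → ℕ} {S T : Set α} (hS : SF w S) (hT : SF w T) (h : Disjoint S T) :
    gf w (S ∪ T) = gf w S + gf w T := by
  ext n
  simp only [gf, coeff_mk, map_add]
  rw [← Nat.cast_add, ← Set.ncard_union_eq _ (hS n) (hT n)]
  · congr 2; ext x; simp only [Set.mem_setOf_eq, Set.mem_union]; tauto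
  · rw [Set.disjoint_left] at *
    exact fun x hx hy => h hx.1 hy.1

lemma SF_union {α : Type*} {w : α → ℕ} {S T : Set α} (hS : SF w S) (hT : SF w T) : SF w (S ∪ T) := by
  intro n
  refine ((hS n).union (hT n)).subset ?_
  rintro x ⟨hx | hx, h⟩
  · exact Or.inl ⟨hx, h⟩
  · exact Or.inr ⟨hx, h⟩

lemma gf_image {α β : Type*} {w : α → ℕ} {v : β → ℕ} {S : Set β} {f : β → α} (k : ℕ) (hf : Set.InjOn f S)
    (hw : ∀ x ∈ S, w (f x) = v x + k) : gf w (f '' S) = X ^ k * gf v S := by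
  ext n
  rw [coeff_X_pow_mul']
  simp only [gf, coeff_mk]
  split_ifs with hk
  · rw [← Set.ncard_image_of_injOn (f := f) (s := {x | x ∈ S ∧ v x = n - k}) (hf.mono fun x hx => hx.1)]
    congr 2
    ext y
    constructor
    · rintro ⟨⟨x, hx, rfl⟩, h⟩
      rw [hw x hx] at h
      exact ⟨x, ⟨hx, by omega⟩, rfl⟩
    · rintro ⟨x, ⟨hx, h⟩, rfl⟩
      exact ⟨⟨x, hx, rfl⟩, by rw [hw x hx]; omega⟩
  · rw [Nat.cast_eq_zero]
    convert Set.ncard_empty α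
    ext y
    simp only [Set.mem_setOf_eq, Set.mem_empty_iff_false, iff_false]
    rintro ⟨⟨x, hx, rfl⟩, h⟩
    rw [hw x hx] at h
    omega

lemma SF_prod {α β : Type*} {w : α → ℕ} {v : β → ℕ} {S : Set α} {T : Set β} (hS : SF w S) (hT : SF v T) :
    SF (fun p : α × β => w p.1 + v p.2) (S ×ˢ T) := by
  intro n
  have h1 : (⋃ i ∈ Finset.range (n+1), {x | x ∈ S ∧ w x = i}).Finite := 
    Set.Finite.biUnion (Finset.finite_toSet _) fun i _ => hS i
  have h2 : (⋃ i ∈ Finset.range (n+1), {x | x ∈ T ∧ v x = i}).Finite := 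
    Set.Finite.biUnion (Finset.finite_toSet _) fun i _ => hT i
  refine (h1.prod h2).subset ?_
  rintro ⟨x, y⟩ ⟨⟨hx, hy⟩, h⟩
  simp at *
  exact ⟨⟨hx, by omega⟩, ⟨hy, by omega⟩⟩

lemma gf_prod {α β : Type*} {w : α → ℕ} {v : β → ℕ} {S : Set α} {T : Set β} (hS : SF w S) (hT : SF v T) :
    gf (fun p : α × β => w p.1 + v p.2) (S ×ˢ T) = gf w S * gf v T := by
  classical
  ext n
  rw [coeff_mul]
  simp only [gf, coeff_mk]
  rw [show {x : α × β | x ∈ S ×ˢ T ∧ w x.1 + v x.2 = n} = 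
    (((Finset.HasAntidiagonal.antidiagonal n).biUnion fun p => (hS p.1).toFinset ×ˢ (hT p.2).toFinset : Finset (α × β)) : Set (α × β)) by
      ext ⟨x, y⟩
      simp
      tauto]
  rw [Set.ncard_coe_finset, Finset.card_biUnion]
  · push_cast
    apply Finset.sum_congr rfl
    intro p _
    rw [Finset.card_product, Set.ncard_eq_toFinset_card _ (hS p.1), Set.ncard_eq_toFinset_card _ (hT p.2)]
    push_cast; rfl
  · intro p _ q _ hpq
    rw [Function.onFun, Finset.disjoint_left]
    rintro ⟨x, y⟩ h1 h2
    simp at h1 h2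
    apply hpq
    ext <;> omega

lemma gf_single {α : Type*} {w : α → ℕ} {a : α} (h : w a = 0) : gf w {a} = 1 := by
  ext n
  simp only [gf, coeff_mk, coeff_one]
  split_ifs with hn
  · rw [show {x | x ∈ ({a} : Set α) ∧ w x = n} = {a} by ext x; simp; rintro rfl; omega]
    simp
  · rw [show {x | x ∈ ({a} : Set α) ∧ w x = n} = ∅ by ext x; simp; rintro rfl; omega]
    simp
lemma SF_single {α : Type*} {w : α → ℕ} {a : α} : SF w {a} := fun n => 
  (Set.finite_singleton a).subset fun x hx => hx.1

lemma SF_pos : SF (id : ℕ → ℕ) {d | 1 ≤ d} := fun n => 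
  (Set.finite_singleton n).subset fun x hx => hx.2
lemma gf_pos : (1 - X) * gf (id : ℕ → ℕ) {d | 1 ≤ d} = X := by
  have e : gf (id : ℕ → ℕ) {d | 1 ≤ d} = X * PowerSeries.mk 1 := by
    ext n
    rcases n with _ | n
    · simp only [gf, coeff_mk, coeff_zero_X_mul]
      rw [show {x : ℕ | x ∈ {d | 1 ≤ d} ∧ id x = 0} = ∅ by ext x; simp; omega]
      simp
    · rw [coeff_succ_X_mul]
      simp only [gf, coeff_mk]
      rw [show {x : ℕ | x ∈ {d | 1 ≤ d} ∧ id x = n + 1} = {n+1} by ext x; simp; omega]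
      simp
  rw [e]
  have := PowerSeries.mk_one_mul_one_sub_eq_one ℚ
  linear_combination X * this

abbrev ln : List ℕ → ℕ := List.length
lemma gf_nil : gf ln {[]} = 1 := gf_single (w := ln) (a := []) rfl
lemma gf_zero : gf (id : ℕ → ℕ) {0} = 1 := gf_single (w := id) (a := 0) rfl
def ST : Set (List ℕ) := {l | Pm l ∧ AvT l}
def SK : Set (List ℕ) := {l | Pm l ∧ AvK l}
def SC : Set (List ℕ) := {l | Pm l ∧ Av231 l}
def SD : Set (List ℕ) := {l | Pm l ∧ Dec l ∧ l ≠ []}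

lemma SF_Pm : SF ln {l | Pm l} := by
  intro n
  refine (List.finite_toSet (List.range' 0 n).permutations).subset ?_
  rintro l ⟨h1, h2⟩
  simp only [Set.mem_setOf_eq, List.mem_permutations]
  rw [← h2]
  exact h1
lemma SF_T : SF ln ST := SF_mono (fun _ h => h.1) SF_Pm
lemma SF_K : SF ln SK := SF_mono (fun _ h => h.1) SF_Pm
lemma SF_C : SF ln SC := SF_mono (fun _ h => h.1) SF_Pm
lemma SF_D : SF ln SD := SF_mono (fun _ h => h.1) SF_Pm

lemma Pm_nil : Pm [] := by simp [Pm]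
lemma nil_T : [] ∈ ST := ⟨Pm_nil, fun _ _ _ _ h => absurd h s4n⟩
lemma nil_K : [] ∈ SK := ⟨Pm_nil, fun _ _ _ h => absurd h s3n, fun _ _ _ _ h => absurd h s4n⟩
lemma nil_C : [] ∈ SC := ⟨Pm_nil, fun _ _ _ h => absurd h s3n⟩

lemma gf_diff {S : Set (List ℕ)} (hS : SF ln S) (h0 : [] ∈ S) : gf ln (S \ {[]}) = gf ln S - 1 := by
  have : gf ln ({[]} ∪ S \ {[]}) = gf ln {[]} + gf ln (S \ {[]}) :=
    gf_union SF_single (SF_mono Set.diff_subset hS) Set.disjoint_sdiff_right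
  rw [Set.union_diff_cancel (by simpa using h0), gf_nil] at this
  rw [this]; ring

lemma gf_D : gf ln SD = gf (id : ℕ → ℕ) {d | 1 ≤ d} := by
  have : SD = (fun d => (List.range' 0 d).reverse) '' {d | 1 ≤ d} := by
    ext l
    constructor
    · rintro ⟨h1, h2, h3⟩
      exact ⟨l.length, List.length_pos_iff.2 h3, (dec_eq h1 h2).symm⟩
    · rintro ⟨d, hd, rfl⟩
      refine ⟨by simp [Pm, List.reverse_perm], rev_dec _ _, ?_⟩
      simp at hd ⊢; omega
  rw [this, gf_image (v := id) 0]
  · simp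
  · intro a _ b _ h
    simpa using congrArg List.length h
  · simp

def Q (S1 S2 : Set (List ℕ)) (S3 : Set ℕ) (S4 : Set (List ℕ)) : Set Tup := S1 ×ˢ (S2 ×ˢ (S3 ×ˢ S4))
lemma SF_Q {S1 S2 S3 S4} (h1 : SF ln S1) (h2 : SF ln S2) (h3 : SF id S3) (h4 : SF ln S4) : SF wt (Q S1 S2 S3 S4) :=
  SF_prod h1 (SF_prod h2 (SF_prod h3 h4))
lemma gf_Q {S1 S2 S3 S4} (h1 : SF ln S1) (h2 : SF ln S2) (h3 : SF id S3) (h4 : SF ln S4) : gf wt (Q S1 S2 S3 S4) =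
   gf ln S1 * (gf ln S2 * (gf id S3 * gf ln S4)) := by
  rw [← gf_prod h3 h4, ← gf_prod h2 (SF_prod h3 h4), ← gf_prod h1 (SF_prod h2 (SF_prod h3 h4))]
  rfl

lemma max_split {l} (h : Pm l) (h0 : l ≠ []) : ∃ L n R, l = L ++ n :: R ∧ Ln L n ∧ Ln R n := by
  have hp := List.length_pos_iff.2 h0
  obtain ⟨L, R, e⟩ := List.append_of_mem ((Pm_mem h (x := l.length - 1)).2 (by omega))
  have nd := Pm_nodup h
  refine ⟨L, _, R, e, ?_, ?_⟩
  all_goals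
    intro x hx
    have h1 : x < l.length := (Pm_mem h).1 (by rw [e]; simp [hx])
    have h2 : x ≠ l.length - 1 := by
      rintro rfl
      rw [e, List.nodup_append] at nd
      first
      | exact nd.2.2 _ hx _ (by simp) rfl
      | exact (List.nodup_cons.1 nd.2.1).1 hx
    omega

lemma good_nil {R n} : Good [] [] n [] R := by
  constructor <;> simp [LL, Dec, s2n]
lemma good_dir {A R n} (h : LL A R) : Good [] A n [] R := by
  constructor <;> simp [LL, Dec, s2n]
  exact h
lemma good_skew {B D n} (h : LL D B) (hD : Dec D) (h1 : B ≠ []) (h2 : D ≠ []) : Good B [] n D [] := by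
  constructor <;> simp [LL, h1, h2, hD]
  exact h

lemma Ln_nil {n} : Ln [] n := by simp [Ln]
def W : Set Tup := {t | Pm t.1 ∧ Pm t.2.1 ∧ Pm t.2.2.2 ∧ (t.2.2.1 = 0 ↔ t.1 = [])}

def QT : Set Tup := ((Q {[]} {[]} {0} ST ∪ Q {[]} (ST \ {[]}) {0} SC) ∪ Q (SK \ {[]}) {[]} {d | 1 ≤ d} SC) ∪ 
  Q SD (ST \ {[]}) {d | 1 ≤ d} SC
def QK : Set Tup := (Q {[]} {[]} {0} SK ∪ Q {[]} (SK \ {[]}) {0} {[]}) ∪ Q (SK \ {[]}) {[]} {d | 1 ≤ d} {[]}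
def QC : Set Tup := Q {[]} SC {0} SC

lemma QT_W : QT ⊆ W := by
  rintro ⟨B, A, d, E⟩ h
  simp only [QT, Q, Set.mem_union, Set.mem_prod, Set.mem_singleton_iff, Set.mem_diff, Set.mem_setOf_eq] at h
  rcases h with ((h | h) | h) | h
  · obtain ⟨rfl, rfl, rfl, h⟩ := h
    exact ⟨Pm_nil, Pm_nil, h.1, by simp⟩
  · obtain ⟨rfl, h', rfl, h⟩ := h
    exact ⟨Pm_nil, h'.1.1, h.1, by simp⟩
  · obtain ⟨h', rfl, h3, h⟩ := h
    exact ⟨h'.1.1, Pm_nil, h.1, by simp [h'.2]; omega⟩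
  · obtain ⟨h', h'', h3, h⟩ := h
    exact ⟨h'.1, h''.1.1, h.1, by simp [h'.2.2]; omega⟩
lemma QK_W : QK ⊆ W := by
  rintro ⟨B, A, d, E⟩ h
  simp only [QK, Q, Set.mem_union, Set.mem_prod, Set.mem_singleton_iff, Set.mem_diff, Set.mem_setOf_eq] at h
  rcases h with (h | h) | h
  · obtain ⟨rfl, rfl, rfl, h⟩ := h
    exact ⟨Pm_nil, Pm_nil, h.1, by simp⟩
  · obtain ⟨rfl, h', rfl, rfl⟩ := h
    exact ⟨Pm_nil, h'.1.1, Pm_nil, by simp⟩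
  · obtain ⟨h', rfl, h3, rfl⟩ := h
    exact ⟨h'.1.1, Pm_nil, Pm_nil, by simp [h'.2]; omega⟩
lemma QC_W : QC ⊆ W := by
  rintro ⟨B, A, d, E⟩ h
  simp only [QC, Q, Set.mem_prod, Set.mem_singleton_iff] at h
  obtain ⟨rfl, h', rfl, h⟩ := h
  exact ⟨Pm_nil, h'.1, h.1, by simp⟩

lemma Phi_ne (t) : Phi t ≠ [] := by
  intro h
  have := congrArg List.length h
  rw [Phi_len] at this
  simp at this

lemma ST_eq : ST = {[]} ∪ Phi '' QT := by
  ext l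
  constructor
  · rintro ⟨hp, ha⟩
    by_cases h0 : l = []
    · exact Or.inl h0
    right
    obtain ⟨L, n, R, rfl, hL, hR⟩ := max_split hp h0
    by_cases hL0 : L = []
    · subst hL0
      obtain ⟨B', E', p1, p2, p3, eB, eE, hz, e⟩ := blocks (B := []) (A := []) (D := []) (E := R) (n := n) hp good_nil Ln_nil Ln_nil Ln_nil hR
      refine ⟨_, ?_, e.symm⟩
      obtain rfl : B' = [] := hz.1 rfl
      refine Or.inl (Or.inl (Or.inl ⟨rfl, rfl, rfl, p3, ?_⟩))
      rw [← sh_AvT, ← eE]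
      exact avT_sub (by simp) ha
    · obtain ⟨B, A, D, E, rfl, rfl, g, h1, h2, h3⟩ := splitT ha hL hR (Pm_nodup hp) hL0
      rw [List.append_assoc] at hp ⊢
      obtain ⟨B', E', p1, p2, p3, eB, eE, hz, e⟩ := blocks hp g (fun x hx => hL x (by simp [hx])) (fun x hx => hL x (by simp [hx]))
        (fun x hx => hR x (by simp [hx])) (fun x hx => hR x (by simp [hx]))
      refine ⟨_, ?_, e.symm⟩
      rw [eE, sh_Av231] at h1
      by_cases hD : D = []
      · subst hD
        obtain rfl : B' = [] := hz.1 rfl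
        obtain rfl : B = [] := g.iff.1 rfl
        refine Or.inl (Or.inl (Or.inr ⟨rfl, ⟨⟨p2, h2⟩, ?_⟩, rfl, p3, h1⟩))
        simpa using hL0
      · have hd : 1 ≤ D.length := List.length_pos_iff.2 hD
        have hB' : B' ≠ [] := fun h => by have := hz.2 h; omega
        by_cases hA : A = []
        · have h4 := (h3 hD).1 hA
          rw [eB, sh_AvK] at h4
          exact Or.inl (Or.inr ⟨⟨⟨p1, h4⟩, hB'⟩, hA, hd, p3, h1⟩)
        · have h4 := (h3 hD).2 hA
          rw [eB, sh_Dec] at h4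
          exact Or.inr ⟨⟨p1, h4, hB'⟩, ⟨⟨p2, h2⟩, hA⟩, hd, p3, h1⟩
  · rintro (h | ⟨⟨B, A, d, E⟩, h, rfl⟩)
    · rw [Set.mem_singleton_iff.1 h]; exact nil_T
    obtain ⟨hB, hA, hE, hd⟩ := QT_W h
    simp only at hB hA hE hd
    refine ⟨Phi_Pm hB hA hE, ?_⟩
    have g := Phi_good hB hA hE hd
    obtain ⟨l1, l2, l3, l4⟩ := Phi_Ln (d := d) hB hA hE
    unfold Phi
    simp only [QT, Q, Set.mem_union, Set.mem_prod, Set.mem_singleton_iff, Set.mem_diff, Set.mem_setOf_eq] at h ⊢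
    rcases h with ((h | h) | h) | h
    · obtain ⟨rfl, rfl, rfl, h⟩ := h
      exact T1 l4 (sh_AvT.2 h.2)
    · obtain ⟨rfl, h', rfl, h⟩ := h
      exact T2 l2 l4 g.AE h'.1.2 (sh_Av231.2 h.2)
    · obtain ⟨h', rfl, h3, h⟩ := h
      exact T3 l1 l3 l4 g.BE g.DE g.DB (sh_AvK.2 h'.1.2) (sh_Av231.2 h.2) g.dec
    · obtain ⟨h', h'', h3, h⟩ := h
      exact T4 l1 l2 l3 l4 g.BE g.AE g.AB g.AD g.DE g.DB h''.1.2 (sh_Av231.2 h.2) (sh_Dec.2 h'.2.1) g.dec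

lemma SK_eq : SK = {[]} ∪ Phi '' QK := by
  ext l
  constructor
  · rintro ⟨hp, ha⟩
    by_cases h0 : l = []
    · exact Or.inl h0
    right
    obtain ⟨L, n, R, rfl, hL, hR⟩ := max_split hp h0
    by_cases hL0 : L = []
    · subst hL0
      obtain ⟨B', E', p1, p2, p3, eB, eE, hz, e⟩ := blocks (B := []) (A := []) (D := []) (E := R) (n := n) hp good_nil Ln_nil Ln_nil Ln_nil hR
      refine ⟨_, ?_, e.symm⟩
      obtain rfl : B' = [] := hz.1 rfl
      refine Or.inl (Or.inl ⟨rfl, rfl, rfl, p3, ?_⟩)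
      rw [← sh_AvK, ← eE]
      exact avK_sub (by simp) ha
    · obtain ⟨h1, h2, h3⟩ := splitK ha hL hR (Pm_nodup hp) hL0
      by_cases hR0 : R = []
      · subst hR0
        obtain ⟨B', E', p1, p2, p3, eB, eE, hz, e⟩ := blocks (B := []) (A := L) (D := []) (E := []) (n := n) hp (good_dir (by simp [LL])) Ln_nil hL Ln_nil Ln_nil
        refine ⟨_, ?_, e.symm⟩
        obtain rfl : B' = [] := hz.1 rfl
        obtain rfl : E' = [] := by simpa [sh] using eE.symm
        exact Or.inl (Or.inr ⟨rfl, ⟨⟨p2, h3⟩, hL0⟩, rfl, rfl⟩)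
      · obtain ⟨B', E', p1, p2, p3, eB, eE, hz, e⟩ := blocks (B := L) (A := []) (D := R) (E := []) (n := n) (by simpa using hp) 
          (good_skew h1 h2 hL0 hR0) hL Ln_nil hR Ln_nil
        refine ⟨_, ?_, (by simpa using e.symm)⟩
        obtain rfl : E' = [] := by simpa [sh] using eE.symm
        rw [eB, sh_AvK] at h3
        have hd : 1 ≤ R.length := List.length_pos_iff.2 hR0
        have hB' : B' ≠ [] := fun h => by have := hz.2 h; omega
        exact Or.inr ⟨⟨⟨p1, h3⟩, hB'⟩, rfl, hd, rfl⟩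
  · rintro (h | ⟨⟨B, A, d, E⟩, h, rfl⟩)
    · rw [Set.mem_singleton_iff.1 h]; exact nil_K
    obtain ⟨hB, hA, hE, hd⟩ := QK_W h
    simp only at hB hA hE hd
    refine ⟨Phi_Pm hB hA hE, ?_⟩
    have g := Phi_good hB hA hE hd
    obtain ⟨l1, l2, l3, l4⟩ := Phi_Ln (d := d) hB hA hE
    unfold Phi
    simp only [QK, Q, Set.mem_union, Set.mem_prod, Set.mem_singleton_iff, Set.mem_diff, Set.mem_setOf_eq] at h ⊢
    rcases h with (h | h) | h
    · obtain ⟨rfl, rfl, rfl, h⟩ := h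
      exact K1 l4 (sh_AvK.2 h.2)
    · obtain ⟨rfl, h', rfl, rfl⟩ := h
      exact K2 l2 Ln_nil (by simp [LL, sh]) h'.1.2 (fun _ _ h => absurd h s2n)
    · obtain ⟨h', rfl, h3, rfl⟩ := h
      have := K2 l1 l3 g.DB (sh_AvK.2 h'.1.2) g.dec
      simpa [sh] using this

lemma SC_eq : SC = {[]} ∪ Phi '' QC := by
  ext l
  constructor
  · rintro ⟨hp, ha⟩
    by_cases h0 : l = []
    · exact Or.inl h0
    right
    obtain ⟨L, n, R, rfl, hL, hR⟩ := max_split hp h0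
    obtain ⟨h1, h2, h3⟩ := splitC ha hL (Pm_nodup hp)
    obtain ⟨B', E', p1, p2, p3, eB, eE, hz, e⟩ := blocks (B := []) (A := L) (D := []) (E := R) (n := n) hp (good_dir h1) Ln_nil hL Ln_nil hR
    refine ⟨_, ?_, e.symm⟩
    obtain rfl : B' = [] := hz.1 rfl
    rw [eE, sh_Av231] at h3
    exact ⟨rfl, ⟨p2, h2⟩, rfl, p3, h3⟩
  · rintro (h | ⟨⟨B, A, d, E⟩, h, rfl⟩)
    · rw [Set.mem_singleton_iff.1 h]; exact nil_C
    obtain ⟨hB, hA, hE, hd⟩ := QC_W h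
    simp only at hB hA hE hd
    refine ⟨Phi_Pm hB hA hE, ?_⟩
    have g := Phi_good hB hA hE hd
    obtain ⟨l1, l2, l3, l4⟩ := Phi_Ln (d := d) hB hA hE
    unfold Phi
    simp only [QC, Q, Set.mem_prod, Set.mem_singleton_iff] at h ⊢
    obtain ⟨rfl, h', rfl, h⟩ := h
    exact C1 l2 l4 g.AE h'.2 (sh_Av231.2 h.2)

lemma gf_Phi {S : Set (List ℕ)} {T : Set Tup} (hS : S = {[]} ∪ Phi '' T) (hT : T ⊆ W) (hSF : SF ln S) :
    gf ln S = 1 + X * gf wt T := by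
  have h1 : gf ln (Phi '' T) = X ^ 1 * gf wt T := gf_image 1 (Phi_inj.mono hT) fun x _ => Phi_len x
  rw [hS, gf_union SF_single (SF_mono _ hSF), gf_nil, h1, pow_one]
  · rw [Set.disjoint_left]
    rintro x hx ⟨t, -, rfl⟩
    exact Phi_ne t hx
  · rw [hS]; exact Set.subset_union_right

lemma SF_0 : SF (id : ℕ → ℕ) {0} := SF_single
lemma SF_n : SF ln {[]} := SF_single
lemma SF_T' : SF ln (ST \ {[]}) := SF_mono Set.diff_subset SF_T
lemma SF_K' : SF ln (SK \ {[]}) := SF_mono Set.diff_subset SF_K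

lemma gfC : gf ln SC = 1 + X * (gf ln SC * gf ln SC) := by
  conv_lhs => rw [gf_Phi SC_eq QC_W SF_C, QC, gf_Q SF_n SF_C SF_0 SF_C, gf_nil, gf_zero]
  ring
lemma gfK : gf ln SK = 1 + X * (gf ln SK + (gf ln SK - 1) + (gf ln SK - 1) * gf id {d : ℕ | 1 ≤ d}) := by
  have q1 := SF_Q SF_n SF_n SF_0 SF_K
  have q2 := SF_Q SF_n SF_K' SF_0 SF_n
  have q3 := SF_Q SF_K' SF_n SF_pos SF_n
  conv_lhs => 
    rw [gf_Phi SK_eq QK_W SF_K, QK, gf_union (SF_union q1 q2) q3 (by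
      rw [Set.disjoint_left]; rintro ⟨B, A, d, E⟩; simp [Q]; grind), gf_union q1 q2 (by
      rw [Set.disjoint_left]; rintro ⟨B, A, d, E⟩; simp [Q]; grind), gf_Q SF_n SF_n SF_0 SF_K, gf_Q SF_n SF_K' SF_0 SF_n,
      gf_Q SF_K' SF_n SF_pos SF_n, gf_diff SF_K nil_K, gf_nil, gf_zero]
  ring
lemma gfT : gf ln ST = 1 + X * (gf ln ST + (gf ln ST - 1) * gf ln SC + (gf ln SK - 1) * gf id {d : ℕ | 1 ≤ d} * gf ln SC
    + gf id {d : ℕ | 1 ≤ d} * (gf ln ST - 1) * gf id {d : ℕ | 1 ≤ d} * gf ln SC) := by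
  have q1 := SF_Q SF_n SF_n SF_0 SF_T
  have q2 := SF_Q SF_n SF_T' SF_0 SF_C
  have q3 := SF_Q SF_K' SF_n SF_pos SF_C
  have q4 := SF_Q SF_D SF_T' SF_pos SF_C
  conv_lhs => 
    rw [gf_Phi ST_eq QT_W SF_T, QT, gf_union (SF_union (SF_union q1 q2) q3) q4 (by
      rw [Set.disjoint_left]; rintro ⟨B, A, d, E⟩; simp [Q]; grind), gf_union (SF_union q1 q2) q3 (by
      rw [Set.disjoint_left]; rintro ⟨B, A, d, E⟩; simp [Q]; grind), gf_union q1 q2 (by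
      rw [Set.disjoint_left]; rintro ⟨B, A, d, E⟩; simp [Q]; grind), gf_Q SF_n SF_n SF_0 SF_T, gf_Q SF_n SF_T' SF_0 SF_C,
      gf_Q SF_K' SF_n SF_pos SF_C, gf_Q SF_D SF_T' SF_pos SF_C, gf_diff SF_K nil_K, gf_diff SF_T nil_T, gf_D, gf_nil, gf_zero]
  ring

def toL {n : ℕ} (π : Equiv.Perm (Fin n)) : List ℕ := List.ofFn fun i => (π i : ℕ)

lemma toL_len {n : ℕ} (π : Equiv.Perm (Fin n)) : (toL π).length = n := by simp [toL]

lemma toL_inj {n : ℕ} : Function.Injective (toL (n := n)) := by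
  intro π ρ h
  have := List.ofFn_injective h
  ext i
  exact congrFun this i

lemma toL_Pm {n : ℕ} (π : Equiv.Perm (Fin n)) : Pm (toL π) := by
  unfold Pm
  rw [toL_len, List.perm_ext_iff_of_nodup]
  · intro a
    simp only [toL, List.mem_ofFn, List.mem_range']
    constructor
    · rintro ⟨i, rfl⟩
      exact ⟨π i, (π i).2, by simp⟩
    · rintro ⟨i, hi, rfl⟩
      exact ⟨π.symm ⟨i, hi⟩, by simp⟩
  · rw [toL, List.nodup_ofFn]
    exact fun a b h => π.injective (Fin.ext h)
  · exact List.nodup_range'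

lemma toL_surj {n : ℕ} {l : List ℕ} (h : Pm l) (hl : l.length = n) : ∃ π : Equiv.Perm (Fin n), toL π = l := by
  subst hl
  have hm : ∀ i : Fin l.length, l.get i < l.length := fun i => (Pm_mem h).1 (List.get_mem _ _)
  let f : Fin l.length → Fin l.length := fun i => ⟨l.get i, hm i⟩
  have hf : Function.Injective f := fun a b hab => 
    (List.nodup_iff_injective_get.1 (Pm_nodup h)) (Fin.mk.inj hab)
  refine ⟨Equiv.ofBijective f (Finite.injective_iff_bijective.1 hf), ?_⟩
  simp [toL, f]

lemma s4_toL {n : ℕ} (π : Equiv.Perm (Fin n)) {p q r s : ℕ} : s4 p q r s (toL π) ↔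
    ∃ f : Fin 4 ↪o Fin n, (π (f 0) : ℕ) = p ∧ (π (f 1) : ℕ) = q ∧ (π (f 2) : ℕ) = r ∧ (π (f 3) : ℕ) = s := by
  unfold s4
  rw [List.sublist_iff_exists_fin_orderEmbedding_get_eq]
  constructor
  · rintro ⟨f, hf⟩
    refine ⟨f.trans (Fin.castOrderIso (toL_len π)).toOrderEmbedding, ?_⟩
    have h0 := hf (0 : Fin 4)
    have h1 := hf (1 : Fin 4)
    have h2 := hf (2 : Fin 4)
    have h3 := hf (3 : Fin 4)
    simp [toL] at h0 h1 h2 h3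
    exact ⟨h0.symm, h1.symm, h2.symm, h3.symm⟩
  · rintro ⟨f, rfl, rfl, rfl, rfl⟩
    refine ⟨(f : Fin 4 ↪o Fin n).trans (Fin.castOrderIso (toL_len π).symm).toOrderEmbedding, ?_⟩
    intro ix
    change Fin 4 at ix
    fin_cases ix <;> simp [toL] <;> rfl

lemma cp_iff {n : ℕ} (π : Equiv.Perm (Fin n)) (σ : Fin 4 → Fin 4) : ContainsPattern π σ ↔ ∃ f : Fin 4 ↪o Fin n,
  ∀ a b : Fin 4, σ a < σ b ↔ (π (f a) : ℕ) < (π (f b) : ℕ) := Iff.rfl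

lemma avT_toL {n : ℕ} (π : Equiv.Perm (Fin n)) : AvT (toL π) ↔
    ∀ σ ∈ ({![0,2,3,1], ![1,3,2,0], ![2,3,0,1]} : Set (Fin 4 → Fin 4)), ¬ ContainsPattern π σ := by
  simp only [Set.mem_insert_iff, Set.mem_singleton_iff, forall_eq_or_imp, forall_eq, cp_iff, not_exists]
  constructor
  · intro h
    refine ⟨fun f hf => ?_, fun f hf => ?_, fun f hf => ?_⟩
    · have := uT h ((s4_toL π).2 ⟨f, rfl, rfl, rfl, rfl⟩)
      exact this.1 ⟨(hf 0 3).1 (by decide), (hf 3 1).1 (by decide), (hf 1 2).1 (by decide)⟩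
    · have := uT h ((s4_toL π).2 ⟨f, rfl, rfl, rfl, rfl⟩)
      exact this.2.1 ⟨(hf 3 0).1 (by decide), (hf 0 2).1 (by decide), (hf 2 1).1 (by decide)⟩
    · have := uT h ((s4_toL π).2 ⟨f, rfl, rfl, rfl, rfl⟩)
      exact this.2.2 ⟨(hf 2 3).1 (by decide), (hf 3 0).1 (by decide), (hf 0 1).1 (by decide)⟩
  · rintro ⟨h1, h2, h3⟩ p q r s hs
    obtain ⟨f, rfl, rfl, rfl, rfl⟩ := (s4_toL π).1 hs
    refine ⟨fun h => h1 f fun a b => ?_, fun h => h2 f fun a b => ?_, fun h => h3 f fun a b => ?_⟩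
    all_goals
      fin_cases a <;> fin_cases b <;> simp <;> omega

lemma gf_ST : avoiderGF ({![0,2,3,1], ![1,3,2,0], ![2,3,0,1]} : Set (Fin 4 → Fin 4)) = gf ln ST := by
  ext n
  simp only [avoiderGF, gf, coeff_mk, avoiderCount]
  congr 1
  rw [show {x | x ∈ ST ∧ ln x = n} = toL (n := n) '' {π | ∀ σ ∈ ({![0,2,3,1], ![1,3,2,0], ![2,3,0,1]} : Set (Fin 4 → Fin 4)), ¬ ContainsPattern π σ} from ?_]
  · rw [Set.ncard_image_of_injective _ toL_inj]
    rfl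
  · ext l
    constructor
    · rintro ⟨⟨h1, h2⟩, h3⟩
      obtain ⟨π, rfl⟩ := toL_surj h1 h3
      exact ⟨π, (avT_toL π).1 h2, rfl⟩
    · rintro ⟨π, h, rfl⟩
      exact ⟨⟨toL_Pm π, (avT_toL π).2 h⟩, toL_len π⟩

lemma cat_eq : catalanGF = 1 + X * (catalanGF * catalanGF) := by
  ext n
  rcases n with _ | n
  · simp [catalanGF]
  · rw [map_add, coeff_succ_X_mul, coeff_mul]
    simp [catalanGF, catalan_succ', coeff_one]

lemma cat_gf : gf ln SC = catalanGF := by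
  have h1 := gfC
  have h2 := cat_eq
  have h : (gf ln SC - catalanGF) * (1 - X * (gf ln SC + catalanGF)) = 0 := by
    linear_combination h1 - h2
  rcases mul_eq_zero.1 h with h | h
  · exact sub_eq_zero.1 h
  · have := congrArg (constantCoeff (R := ℚ)) h
    simp at this

lemma alg (F C K P : PowerSeries ℚ) (hC : C = 1 + X * (C * C)) (hP : (1 - X) * P = X)
    (hK : K = 1 + X * (K + (K - 1) + (K - 1) * P))
    (hF : F = 1 + X * (F + (F - 1) * C + (K - 1) * P * C + P * (F - 1) * P * C)) :
    X * (1 - 3*X + X^2) * (1 - X + X^3) * F =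
      (1 - X)^2 * (1 - 4*X + 6*X^2 - 5*X^3 + X^4) * C
        - (1 - 6*X + 14*X^2 - 15*X^3 + 8*X^4 - X^5) := by
  have k1 : (K - 1) * (1 - 3*X + X^2) = X * (1 - X) := by
    linear_combination (1 - X) * hK + X * (K - 1) * hP
  have f1 : (F - 1) * ((1-X)^3 - X * (1 - 2*X + 2*X^2) * C) = X * (1-X)^2 + X^2 * (1-X) * (K-1) * C := by
    linear_combination (1 - X)^2 * hF + (X * (1-X) * (K - 1) * C + X * (F-1) * C * ((1-X) * P + X)) * hP
  have f2 : (1 - 3*X + X^2) * (F - 1) * ((1-X)^3 - X * (1 - 2*X + 2*X^2) * C) = 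
      X * (1-X)^2 * ((1 - 3*X + X^2) + X^2 * C) := by
    linear_combination (1 - 3*X + X^2) * f1 + X^2 * (1-X) * C * k1
  have hX : (X : PowerSeries ℚ)^3 ≠ 0 := pow_ne_zero _ X_ne_zero
  apply mul_left_cancel₀ hX
  linear_combination ((1-X)^3 * X - X * (1 - 2*X + 2*X^2) + X * (1 - 2*X + 2*X^2) * X * C) * f2 
    + (- (1 - 3*X + X^2) * (F - 1) * (X * (1 - 2*X + 2*X^2))^2 - X^3 * (1-X)^2 * X * (1 - 2*X + 2*X^2)) * hC

end S11

theorem statement_11 :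
    (X : PowerSeries ℚ) * (1 - 3*X + X^2) * (1 - X + X^3) * avoiderGF ({![0,2,3,1], ![1,3,2,0], ![2,3,0,1]} : Set (Fin 4 → Fin 4)) =
      (1 - X)^2 * (1 - 4*X + 6*X^2 - 5*X^3 + X^4) * catalanGF
        - (1 - 6*X + 14*X^2 - 15*X^3 + 8*X^4 - X^5) := by
  rw [S11.gf_ST, ← S11.cat_gf]
  exact S11.alg _ _ _ _ S11.gfC S11.gf_pos S11.gfK S11.gfT
end
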